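/- arXiv:1809.06075 — 4 statements merged into one kernel-verified Lean document; each statement's English description precedes it below -/
import Mathlib

section
/- Suppose F : ℝ^N → ℝ is continuously differentiable and satisfies the Łojasiewicz inequality at every critical point: for every ξ̄ with ∇F(ξ̄) = 0 there exist an open neighborhood U(ξ̄) of ξ̄ and constants C > 0 and γ ∈ (0, 1/2] such that |F(ξ) − F(ξ̄)|^{1−γ} ≤ C |∇F(ξ)| for every ξ ∈ U(ξ̄). Let ξ : [0, ∞) → ℝ^N be a bounded solution of the gradient flow ξ'(t) = −∇F(ξ(t)). Then the limit ξ_∞ := lim_{t→∞} ξ(t) exists (and is a critical point of F), and there exist constants C' > 0 and c > 0 such that, with γ the Łojasiewicz exponent at ξ_∞, one has |ξ(t) − ξ_∞| ≤ C' t^{−γ/(1−2γ)} for all t ≥ 1 if γ < 1/2, and |ξ(t) − ξ_∞| ≤ C' e^{−c t} for all t ≥ 1 if γ = 1/2. -/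
open Filter Topology Set

/-!
Let `x` be a cluster point of the flow and `y = F ∘ ξ - F x`, which is nonnegative and satisfies
`y' = -‖∇F(ξ)‖²`. Near a noncritical point the Łojasiewicz inequality holds by continuity, so it
may be assumed near `x`. While `ξ` stays there, `(y ^ γ)' = -γ y ^ (γ - 1) ‖∇F(ξ)‖²` is at most
`-(γ / C) ‖ξ'‖`, so the arc length is bounded by the decrease of `(C / γ) y ^ γ`. This traps the
curve near `x` once it has come close with small `y`; hence `ξ` converges to `x`, and
`‖ξ t - x‖ ≤ (C / γ) (y t) ^ γ` eventually. The rates follow from `y' ≤ -C⁻² y ^ (2 * (1 - γ))`.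
-/

lemma eq_zero_of_hasDerivWithinAt_Ici {E : Type*} [NormedAddCommGroup E] [NormedSpace ℝ E]
    {y : ℝ → E} {y' : E} {u : ℝ} (hy : HasDerivWithinAt y y' (Ici u) u)
    (hzero : EqOn y 0 (Ici u)) : y' = 0 :=
  (uniqueDiffWithinAt_Ici u).eq_deriv _ hy <|
    (hasDerivWithinAt_const u (Ici u) (0 : E)).congr_of_mem hzero self_mem_Ici

-- Right derivatives let `y ^ p` be differentiated at the time `y` reaches `0` and stays there, even
-- for `p < 1`; there `y` has zero derivative, so the junk value of `0 ^ (p - 1)` does not matter.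
lemma hasDerivWithinAt_Ici_rpow_const {y : ℝ → ℝ} {y' u p : ℝ} (hp : p ≠ 0)
    (hy : HasDerivWithinAt y y' (Ici u) u) (h : y u ≠ 0 ∨ EqOn y 0 (Ici u)) :
    HasDerivWithinAt (fun v ↦ y v ^ p) (y' * p * y u ^ (p - 1)) (Ici u) u := by
  rcases h with hne | hzero
  · exact hy.rpow_const (Or.inl hne)
  · rw [eq_zero_of_hasDerivWithinAt_Ici hy hzero, zero_mul, zero_mul]
    refine (hasDerivWithinAt_const u (Ici u) (0 : ℝ)).congr_of_mem (fun v hv ↦ ?_) self_mem_Ici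
    rw [hzero hv, Pi.zero_apply, Real.zero_rpow hp]

lemma antitoneOn_Ici_of_hasDerivWithinAt_nonpos {y y' : ℝ → ℝ} {s : ℝ}
    (hy : ∀ t ∈ Ici s, HasDerivWithinAt y (y' t) (Ici s) t) (hy' : ∀ t ∈ Ici s, y' t ≤ 0) :
    AntitoneOn y (Ici s) :=
  antitoneOn_of_hasDerivWithinAt_nonpos (convex_Ici s) (fun t ht ↦ (hy t ht).continuousWithinAt)
    (fun t ht ↦ (hy t (interior_subset ht)).mono interior_subset)
    fun t ht ↦ hy' t (interior_subset ht)

lemma mul_le_mul_rpow_of_le_neg_mul_rpow {a b k p : ℝ} (ha : 0 < a) (hp : 0 ≤ p)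
    (hb : b ≤ -k * a ^ (1 + p)) : p * k ≤ b * -p * a ^ (-p - 1) := by
  have hone : a ^ (1 + p) * a ^ (-p - 1) = 1 := by
    rw [← Real.rpow_add ha, show 1 + p + (-p - 1) = 0 by ring, Real.rpow_zero]
  calc p * k = p * (k * (a ^ (1 + p) * a ^ (-p - 1))) := by rw [hone, mul_one]
    _ = p * (k * a ^ (1 + p)) * a ^ (-p - 1) := by ring
    _ ≤ p * -b * a ^ (-p - 1) := by
      gcongr
      linarith
    _ = b * -p * a ^ (-p - 1) := by ring

lemma le_rpow_of_deriv_le_neg_mul_rpow {y y' : ℝ → ℝ} {s k p : ℝ} (hk : 0 < k) (hp : 0 < p)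
    (hy : ∀ t ∈ Ici s, HasDerivWithinAt y (y' t) (Ici s) t) (hnonneg : ∀ t ∈ Ici s, 0 ≤ y t)
    (hbound : ∀ t ∈ Ici s, y' t ≤ -k * y t ^ (1 + p)) {t : ℝ} (hst : s < t) :
    y t ≤ (p * k * (t - s)) ^ (-p⁻¹) := by
  have hanti : AntitoneOn y (Ici s) := antitoneOn_Ici_of_hasDerivWithinAt_nonpos hy fun u hu ↦
    (hbound u hu).trans <| by
      rw [neg_mul, neg_nonpos]
      exact mul_nonneg hk.le (Real.rpow_nonneg (hnonneg u hu) _)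
  have hlin : 0 < p * k * (t - s) := mul_pos (mul_pos hp hk) (sub_pos.2 hst)
  rcases (hnonneg t hst.le).eq_or_lt with hzero | hpos
  · exact hzero ▸ Real.rpow_nonneg hlin.le _
  have hypos : ∀ u ∈ Icc s t, 0 < y u := fun u hu ↦ hpos.trans_le (hanti hu.1 hst.le hu.2)
  have hderiv : ∀ u ∈ Icc s t, HasDerivWithinAt (fun v ↦ y v ^ (-p))
      (y' u * -p * y u ^ (-p - 1)) (Ici s) u := fun u hu ↦
    (hy u hu.1).rpow_const (Or.inl (hypos u hu).ne')
  have hgrowth : p * k * (t - s) ≤ y t ^ (-p) :=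
    image_le_of_deriv_right_le_deriv_boundary (f := fun u ↦ p * k * (u - s)) (f' := fun _ ↦ p * k)
      (by fun_prop)
      (fun u _ ↦ by
        simpa using (((hasDerivAt_id u).sub_const s).const_mul (p * k)).hasDerivWithinAt)
      (by simpa using Real.rpow_nonneg (hnonneg s self_mem_Ici) (-p))
      (fun u hu ↦ (hderiv u hu).continuousWithinAt.mono Icc_subset_Ici_self)
      (fun u hu ↦ (hderiv u ⟨hu.1, hu.2.le⟩).mono (Ici_subset_Ici.2 hu.1))
      (fun u hu ↦
        mul_le_mul_rpow_of_le_neg_mul_rpow (hypos u ⟨hu.1, hu.2.le⟩) hp.le (hbound u hu.1))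
      ⟨hst.le, le_rfl⟩
  calc y t = (y t ^ (-p)) ^ (-p⁻¹) := by
        rw [← Real.rpow_mul hpos.le, neg_mul_neg, mul_inv_cancel₀ hp.ne', Real.rpow_one]
    _ ≤ (p * k * (t - s)) ^ (-p⁻¹) :=
      Real.rpow_le_rpow_of_nonpos hlin hgrowth (by simpa using hp.le)

lemma isBigO_rpow_of_deriv_le_neg_mul_rpow {y y' : ℝ → ℝ} {s k p : ℝ} (hk : 0 < k) (hp : 0 < p)
    (hy : ∀ t ∈ Ici s, HasDerivWithinAt y (y' t) (Ici s) t) (hnonneg : ∀ t ∈ Ici s, 0 ≤ y t)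
    (hbound : ∀ t ∈ Ici s, y' t ≤ -k * y t ^ (1 + p)) :
    y =O[atTop] fun t ↦ t ^ (-p⁻¹) := by
  refine .of_bound ((p * k * 2⁻¹) ^ (-p⁻¹)) ?_
  filter_upwards [eventually_gt_atTop s, eventually_ge_atTop (2 * s), eventually_gt_atTop 0]
    with t hst hst' ht
  rw [Real.norm_of_nonneg (hnonneg t hst.le), Real.norm_of_nonneg (by positivity),
    ← Real.mul_rpow (by positivity) ht.le]
  refine (le_rpow_of_deriv_le_neg_mul_rpow hk hp hy hnonneg hbound hst).trans <|
    Real.rpow_le_rpow_of_nonpos (by positivity) ?_ (by simpa using hp.le)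
  rw [mul_assoc (p * k)]
  gcongr
  linarith

lemma isBigO_exp_of_deriv_le_neg_mul {y y' : ℝ → ℝ} {s k : ℝ}
    (hy : ∀ t ∈ Ici s, HasDerivWithinAt y (y' t) (Ici s) t) (hnonneg : ∀ t ∈ Ici s, 0 ≤ y t)
    (hbound : ∀ t ∈ Ici s, y' t ≤ -k * y t) :
    y =O[atTop] fun t ↦ Real.exp (-(k * t)) := by
  refine .of_bound (y s * Real.exp (k * s)) ?_
  filter_upwards [eventually_ge_atTop s] with t hst
  have hgronwall : y t ≤ gronwallBound (y s) (-k) 0 (t - s) :=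
    le_gronwallBound_of_liminf_deriv_right_le
      (fun u hu ↦ (hy u hu.1).continuousWithinAt.mono Icc_subset_Ici_self)
      (fun u hu _ ↦ ((hy u hu.1).mono (Ici_subset_Ici.2 hu.1)).liminf_right_slope_le) le_rfl
      (fun u hu ↦ by simpa using hbound u hu.1) t ⟨hst, le_rfl⟩
  rw [Real.norm_of_nonneg (hnonneg t hst), Real.norm_of_nonneg (Real.exp_nonneg _), mul_assoc,
    ← Real.exp_add]
  rw [gronwallBound_ε0] at hgronwall
  convert hgronwall using 3
  ring

lemma le_of_antitoneOn_of_mapClusterPt {α β : Type*} [Preorder α] [LinearOrder β]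
    [TopologicalSpace β] [ClosedIicTopology β] {f : α → β} {s t : α} {l : β}
    (hf : AntitoneOn f (Ici s)) (hl : MapClusterPt l atTop f) (ht : t ∈ Ici s) :
    l ≤ f t := by
  by_contra! hlt
  obtain ⟨u, hu, htu⟩ :=
    ((hl.frequently (Ioi_mem_nhds hlt)).and_eventually (eventually_ge_atTop t)).exists
  exact hu.not_ge (hf ht (ht.trans htu) htu)

lemma forall_mem_of_forall_Ico_mem {α X : Type*} [ConditionallyCompleteLinearOrder α]
    [TopologicalSpace α] [OrderTopology α] [TopologicalSpace X] {ξ : α → X} {s : α} {U : Set X}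
    (hU : IsOpen U) (hξ : ContinuousOn ξ (Ici s))
    (hstep : ∀ t ∈ Ici s, (∀ u ∈ Ico s t, ξ u ∈ U) → ξ t ∈ U) : ∀ t ∈ Ici s, ξ t ∈ U := by
  by_contra! hexit
  set S := Ici s ∩ ξ ⁻¹' Uᶜ
  have hbdd : BddBelow S := ⟨s, fun u hu ↦ hu.1⟩
  have hfirst : sInf S ∈ S :=
    (hξ.preimage_isClosed_of_isClosed isClosed_Ici hU.isClosed_compl).csInf_mem hexit hbdd
  refine hfirst.2 (hstep _ hfirst.1 fun u hu ↦ ?_)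
  by_contra hmem
  exact hu.2.not_ge (csInf_le hbdd ⟨hu.1, hmem⟩)

lemma exists_forall_norm_le_mul_of_isBigO {α E : Type*} [ConditionallyCompleteLinearOrder α]
    [TopologicalSpace α] [OrderTopology α] [SeminormedAddCommGroup E]
    {f : α → E} {g : α → ℝ} {a : α}
    (hf : ContinuousOn f (Ici a)) (hg : ContinuousOn g (Ici a)) (hpos : ∀ t ∈ Ici a, 0 < g t)
    (hfg : f =O[atTop] g) : ∃ C > 0, ∀ t ∈ Ici a, ‖f t‖ ≤ C * g t := by
  have : Nonempty α := ⟨a⟩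
  obtain ⟨c, hc, hfg⟩ := hfg.exists_pos
  obtain ⟨T, hT⟩ := eventually_atTop.1 hfg.bound
  have hratio : ContinuousOn (fun t ↦ ‖f t‖ / g t) (Icc a T) :=
    (hf.norm.div hg fun t ht ↦ (hpos t ht).ne').mono Icc_subset_Ici_self
  obtain ⟨M, hM⟩ := isCompact_Icc.exists_bound_of_continuousOn hratio
  refine ⟨max c M, lt_max_of_lt_left hc, fun t ht ↦ ?_⟩
  have hgt := hpos t ht
  rw [← div_le_iff₀ hgt]
  rcases le_total t T with htT | hTt
  · exact ((le_abs_self _).trans (hM t ⟨ht, htT⟩)).trans (le_max_right c M)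
  · have htail := hT t hTt
    rw [Real.norm_of_nonneg hgt.le, ← div_le_iff₀ hgt] at htail
    exact htail.trans (le_max_left c M)

lemma eq_zero_of_isIntegralCurveOn_of_tendsto {E : Type*} [NormedAddCommGroup E]
    [NormedSpace ℝ E] {ξ : ℝ → E} {v : E → E} {s : ℝ} {x : E}
    (hξ : IsIntegralCurveOn ξ (fun _ ↦ v) (Ici s)) (hlim : Tendsto ξ atTop (𝓝 x))
    (hv : ContinuousAt v x) : v x = 0 := by
  -- Increments over unit time tend to `0` by convergence and to `v x` by the mean value inequality.
  have hincr : Tendsto (fun t ↦ ‖ξ (t + 1) - ξ t - v x‖) atTop (𝓝 ‖v x‖) := by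
    simpa using
      (((hlim.comp (tendsto_atTop_add_const_right _ 1 tendsto_id)).sub hlim).sub_const (v x)).norm
  refine norm_le_zero_iff.1 (le_of_forall_pos_le_add fun ε hε ↦ ?_)
  obtain ⟨T, hT⟩ := eventually_atTop.1 <|
    (hv.tendsto.comp hlim).eventually (Metric.closedBall_mem_nhds (v x) hε)
  refine le_of_tendsto hincr ?_
  filter_upwards [eventually_ge_atTop s, eventually_ge_atTop T] with t hst hTt
  have hderiv : ∀ u ∈ Icc t (t + 1),
      HasDerivWithinAt (fun w ↦ ξ w - w • v x) (v (ξ u) - v x) (Icc t (t + 1)) u := fun u hu ↦ by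
    have hsub : Icc t (t + 1) ⊆ Ici s := Icc_subset_Ici_self.trans (Ici_subset_Ici.2 hst)
    simpa using ((hξ u (hst.trans hu.1)).mono hsub).fun_sub
      ((hasDerivWithinAt_id u _).smul_const (v x))
  have hmvt := (convex_Icc t (t + 1)).norm_image_sub_le_of_norm_hasDerivWithin_le hderiv
    (fun u hu ↦ (dist_eq_norm (v (ξ u)) (v x)) ▸ hT u (hTt.trans hu.1))
    (left_mem_Icc.2 (by linarith)) (right_mem_Icc.2 (by linarith))
  calc ‖ξ (t + 1) - ξ t - v x‖ = ‖ξ (t + 1) - (t + 1) • v x - (ξ t - t • v x)‖ := by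
        congr 1
        module
    _ ≤ 0 + ε := by simpa using hmvt

section GradientFlow

variable {E : Type*} [NormedAddCommGroup E] [InnerProductSpace ℝ E] [CompleteSpace E]
  {F : E → ℝ} {ξ : ℝ → E} {x z : E} {C γ s t : ℝ} {S : Set ℝ}

/-- The Łojasiewicz gradient inequality for `F` at the base point `x`, with constant `C` and
exponent `γ`, tested at a single point `z`. It can thus be required near `x` or along a curve. -/
def LojasiewiczInequality (F : E → ℝ) (x : E) (C γ : ℝ) (z : E) : Prop :=
  |F z - F x| ^ (1 - γ) ≤ C * ‖gradient F z‖

/-- `ξ` is a curve of steepest descent of `F` on `S`, that is, a solution of `ξ' = -∇F(ξ)`; the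
derivative is taken within `S`, so it is one-sided at a closed endpoint. -/
def IsGradientFlowOn (F : E → ℝ) (ξ : ℝ → E) (S : Set ℝ) : Prop :=
  IsIntegralCurveOn ξ (fun _ z ↦ -gradient F z) S

lemma continuous_gradient_of_contDiff (hF : ContDiff ℝ 1 F) : Continuous (gradient F) :=
  (InnerProductSpace.toDual ℝ E).symm.continuous.comp (hF.continuous_fderiv one_ne_zero)

namespace LojasiewiczInequality

lemma eventually_of_gradient_ne_zero (hF : ContDiff ℝ 1 F) (hx : gradient F x ≠ 0) (hC : 0 < C)
    (hγ : γ < 1) : ∀ᶠ z in 𝓝 x, LojasiewiczInequality F x C γ z := by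
  have hleft : ContinuousAt (fun z ↦ |F z - F x| ^ (1 - γ)) x :=
    ((hF.continuous.sub continuous_const).abs.rpow_const fun _ ↦ Or.inr (by linarith)).continuousAt
  have hright : ContinuousAt (fun z ↦ C * ‖gradient F z‖) x :=
    ((continuous_gradient_of_contDiff hF).norm.const_mul C).continuousAt
  refine (hleft.eventually_lt hright ?_).mono fun z hz ↦ hz.le
  rw [sub_self, abs_zero, Real.zero_rpow (by linarith)]
  positivity

lemma norm_gradient_le (h : LojasiewiczInequality F x C γ z) (hz : F x < F z) (hγ : γ ≠ 0) :
    ‖gradient F z‖ ≤ C / γ * (‖gradient F z‖ ^ 2 * γ * (F z - F x) ^ (γ - 1)) := by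
  have hpos : 0 < F z - F x := sub_pos.2 hz
  rw [LojasiewiczInequality, abs_of_pos hpos] at h
  calc ‖gradient F z‖
      = ‖gradient F z‖ * ((F z - F x) ^ (1 - γ) * (F z - F x) ^ (γ - 1)) := by
        rw [← Real.rpow_add hpos, sub_add_sub_cancel, sub_self, Real.rpow_zero, mul_one]
    _ ≤ ‖gradient F z‖ * (C * ‖gradient F z‖ * (F z - F x) ^ (γ - 1)) := by gcongr
    _ = C / γ * (‖gradient F z‖ ^ 2 * γ * (F z - F x) ^ (γ - 1)) := by field_simp

lemma rpow_le_norm_gradient_sq (h : LojasiewiczInequality F x C γ z) (hz : F x ≤ F z)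
    (hC : 0 < C) : (C ^ 2)⁻¹ * (F z - F x) ^ (2 * (1 - γ)) ≤ ‖gradient F z‖ ^ 2 := by
  have hnonneg : 0 ≤ F z - F x := sub_nonneg.2 hz
  rw [LojasiewiczInequality, abs_of_nonneg hnonneg] at h
  rw [inv_mul_le_iff₀ (by positivity), ← mul_pow]
  calc (F z - F x) ^ (2 * (1 - γ)) = ((F z - F x) ^ (1 - γ)) ^ 2 := by
        rw [mul_comm, ← Nat.cast_ofNat, Real.rpow_mul_natCast hnonneg]
    _ ≤ (C * ‖gradient F z‖) ^ 2 := by gcongr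

end LojasiewiczInequality

namespace IsGradientFlowOn

lemma mono {S' : Set ℝ} (hξ : IsGradientFlowOn F ξ S) (hS : S' ⊆ S) : IsGradientFlowOn F ξ S' :=
  IsIntegralCurveOn.mono hξ hS

lemma hasDerivWithinAt_energy (hξ : IsGradientFlowOn F ξ S) (hF : Differentiable ℝ F)
    (ht : t ∈ S) (a : ℝ) :
    HasDerivWithinAt (fun u ↦ F (ξ u) - a) (-‖gradient F (ξ t)‖ ^ 2) S t := by
  have hchain := (hF (ξ t)).hasGradientAt.hasFDerivAt.comp_hasDerivWithinAt t (hξ t ht)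
  rw [InnerProductSpace.toDual_apply_apply, inner_neg_right, real_inner_self_eq_norm_sq] at hchain
  exact hchain.sub_const a

lemma antitoneOn_energy (hξ : IsGradientFlowOn F ξ (Ici s)) (hF : Differentiable ℝ F) :
    AntitoneOn (F ∘ ξ) (Ici s) :=
  antitoneOn_Ici_of_hasDerivWithinAt_nonpos
    (fun t ht ↦ by simpa using! hξ.hasDerivWithinAt_energy hF ht 0)
    fun t _ ↦ neg_nonpos.2 (sq_nonneg _)

lemma le_energy_of_mapClusterPt (hξ : IsGradientFlowOn F ξ (Ici s)) (hF : Differentiable ℝ F)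
    (hx : MapClusterPt x atTop ξ) (ht : t ∈ Ici s) : F x ≤ F (ξ t) :=
  le_of_antitoneOn_of_mapClusterPt (f := F ∘ ξ) (hξ.antitoneOn_energy hF)
    (hx.continuousAt_comp hF.continuous.continuousAt) ht

lemma gradient_eq_zero_of_tendsto (hξ : IsGradientFlowOn F ξ (Ici s)) (hF : ContDiff ℝ 1 F)
    (hlim : Tendsto ξ atTop (𝓝 x)) : gradient F x = 0 :=
  neg_eq_zero.1 <| eq_zero_of_isIntegralCurveOn_of_tendsto (v := fun z ↦ -gradient F z) hξ hlim
    (continuous_gradient_of_contDiff hF).neg.continuousAt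

lemma eqOn_energy_of_eq (hξ : IsGradientFlowOn F ξ (Ici s)) (hF : Differentiable ℝ F)
    (hlow : ∀ u ∈ Ici s, F x ≤ F (ξ u)) (ht : t ∈ Ici s) (heq : F (ξ t) = F x) :
    EqOn (fun u ↦ F (ξ u) - F x) 0 (Ici t) := fun u hu ↦ by
  have hus : u ∈ Ici s := Ici_subset_Ici.2 ht hu
  have hle : F (ξ u) ≤ F (ξ t) := hξ.antitoneOn_energy hF ht hus hu
  exact sub_eq_zero.2 ((hle.trans_eq heq).antisymm (hlow u hus))

lemma dist_le_rpow_energy_sub (hξ : IsGradientFlowOn F ξ (Ici s)) (hF : Differentiable ℝ F)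
    (hlow : ∀ u ∈ Ici s, F x ≤ F (ξ u)) (hγ : 0 < γ) (hst : s ≤ t)
    (hL : ∀ u ∈ Ico s t, LojasiewiczInequality F x C γ (ξ u)) :
    dist (ξ t) (ξ s) ≤ C / γ * (F (ξ s) - F x) ^ γ - C / γ * (F (ξ t) - F x) ^ γ := by
  have hsub : ∀ {u}, u ∈ Ici s → Ici u ⊆ Ici s := fun hu ↦ Ici_subset_Ici.2 hu
  have henergy : ∀ u ∈ Ici s,
      HasDerivWithinAt (fun v ↦ F (ξ v) - F x) (-‖gradient F (ξ u)‖ ^ 2) (Ici u) u := fun u hu ↦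
    (hξ.hasDerivWithinAt_energy hF hu (F x)).mono (hsub hu)
  have hrpow : ∀ u ∈ Ici s, HasDerivWithinAt (fun v ↦ (F (ξ v) - F x) ^ γ)
      (-‖gradient F (ξ u)‖ ^ 2 * γ * (F (ξ u) - F x) ^ (γ - 1)) (Ici u) u := fun u hu ↦
    hasDerivWithinAt_Ici_rpow_const hγ.ne' (henergy u hu) <| or_iff_not_imp_left.2 fun h ↦
      hξ.eqOn_energy_of_eq hF hlow hu (sub_eq_zero.1 (not_not.1 h))
  have hrpow_cont : ContinuousOn (fun u ↦ (F (ξ u) - F x) ^ γ) (Icc s t) := fun u hu ↦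
    ((hξ.hasDerivWithinAt_energy hF hu.1 (F x)).continuousWithinAt.rpow_const
      (Or.inr hγ.le)).mono Icc_subset_Ici_self
  have hspeed : ∀ u ∈ Ico s t, ‖-gradient F (ξ u)‖ ≤
      -(C / γ * (-‖gradient F (ξ u)‖ ^ 2 * γ * (F (ξ u) - F x) ^ (γ - 1))) := fun u hu ↦ by
    rcases (hlow u hu.1).eq_or_lt with heq | hlt
    · have hgrad : gradient F (ξ u) = 0 := by
        simpa using eq_zero_of_hasDerivWithinAt_Ici (henergy u hu.1)
          (hξ.eqOn_energy_of_eq hF hlow hu.1 heq.symm)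
      simp [hgrad]
    · simpa using (hL u hu).norm_gradient_le hlt hγ.ne'
  rw [dist_eq_norm]
  exact image_norm_le_of_norm_deriv_right_le_deriv_boundary'
    (f := fun u ↦ ξ u - ξ s)
    (B := fun u ↦ C / γ * (F (ξ s) - F x) ^ γ - C / γ * (F (ξ u) - F x) ^ γ)
    (fun u hu ↦ ((hξ u hu.1).continuousWithinAt.mono Icc_subset_Ici_self).sub_const _)
    (fun u hu ↦ ((hξ u hu.1).mono (hsub hu.1)).sub_const _)
    (by simp)
    (fun u hu ↦ continuousWithinAt_const.sub (continuousWithinAt_const.mul (hrpow_cont u hu)))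
    (fun u hu ↦ ((hrpow u hu.1).const_mul (C / γ)).const_sub _)
    hspeed ⟨hst, le_rfl⟩

theorem tendsto_of_mapClusterPt (hξ : IsGradientFlowOn F ξ (Ici s)) (hF : Differentiable ℝ F)
    (hx : MapClusterPt x atTop ξ) (hC : 0 ≤ C) (hγ : 0 < γ)
    (hL : ∀ᶠ z in 𝓝 x, LojasiewiczInequality F x C γ z) : Tendsto ξ atTop (𝓝 x) := by
  refine Metric.nhds_basis_ball.tendsto_right_iff.2 fun ε hε ↦ ?_
  obtain ⟨r, hr, hball⟩ := Metric.eventually_nhds_iff_ball.1 hL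
  set ρ := min ε r
  have hρ : 0 < ρ := lt_min hε hr
  have hsmall : ∀ᶠ z in 𝓝 x, C / γ * (F z - F x) ^ γ + dist z x < ρ := by
    have hcont : Continuous fun z ↦ C / γ * (F z - F x) ^ γ + dist z x :=
      (((hF.continuous.sub continuous_const).rpow_const fun _ ↦ Or.inr hγ.le).const_mul _).add
        (continuous_id.dist continuous_const)
    refine hcont.continuousAt.eventually_lt_const ?_
    simpa [Real.zero_rpow hγ.ne'] using hρ
  obtain ⟨t₀, ht₀, hst₀⟩ := ((hx.frequently hsmall).and_eventually (eventually_ge_atTop s)).exists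
  have hflow : IsGradientFlowOn F ξ (Ici t₀) := hξ.mono (Ici_subset_Ici.2 hst₀)
  have hlow : ∀ u ∈ Ici t₀, F x ≤ F (ξ u) := fun u ↦ hflow.le_energy_of_mapClusterPt hF hx
  have htrapped : ∀ t ∈ Ici t₀, ξ t ∈ Metric.ball x ρ :=
    forall_mem_of_forall_Ico_mem Metric.isOpen_ball hflow.continuousOn fun t ht hbefore ↦ by
      have hlength := hflow.dist_le_rpow_energy_sub hF hlow hγ ht fun u hu ↦
        hball _ (Metric.ball_subset_ball (min_le_right _ _) (hbefore u hu))
      have hrest : 0 ≤ C / γ * (F (ξ t) - F x) ^ γ :=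
        mul_nonneg (by positivity) (Real.rpow_nonneg (sub_nonneg.2 (hlow t ht)) γ)
      calc dist (ξ t) x ≤ dist (ξ t) (ξ t₀) + dist (ξ t₀) x := dist_triangle _ _ _
        _ < ρ := by linarith
  filter_upwards [eventually_ge_atTop t₀] with t ht
  exact Metric.ball_subset_ball (min_le_left _ _) (htrapped t ht)

lemma isBigO_rpow_energy (hξ : IsGradientFlowOn F ξ (Ici s)) (hF : Differentiable ℝ F)
    (hlim : Tendsto ξ atTop (𝓝 x)) (hC : 0 ≤ C) (hγ : 0 < γ)
    (hL : ∀ u ∈ Ici s, LojasiewiczInequality F x C γ (ξ u)) :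
    (fun t ↦ ξ t - x) =O[atTop] fun t ↦ (F (ξ t) - F x) ^ γ := by
  have hlow : ∀ u ∈ Ici s, F x ≤ F (ξ u) := fun u ↦
    hξ.le_energy_of_mapClusterPt hF hlim.mapClusterPt
  have hrpow : ∀ u ∈ Ici s, 0 ≤ (F (ξ u) - F x) ^ γ := fun u hu ↦
    Real.rpow_nonneg (sub_nonneg.2 (hlow u hu)) γ
  refine .of_bound (C / γ) ?_
  filter_upwards [eventually_ge_atTop s] with t hst
  rw [Real.norm_of_nonneg (hrpow t hst), ← dist_eq_norm, dist_comm]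
  refine le_of_tendsto (hlim.dist tendsto_const_nhds) ?_
  filter_upwards [eventually_ge_atTop t] with u htu
  have hsub : Ici t ⊆ Ici s := Ici_subset_Ici.2 hst
  have hlength := (hξ.mono hsub).dist_le_rpow_energy_sub hF (fun v hv ↦ hlow v (hsub hv)) hγ htu
    fun v hv ↦ hL v (hsub hv.1)
  have hrest : 0 ≤ C / γ * (F (ξ u) - F x) ^ γ := mul_nonneg (by positivity) (hrpow u (hsub htu))
  linarith

theorem isBigO_rpow (hξ : IsGradientFlowOn F ξ (Ici s)) (hF : Differentiable ℝ F)
    (hlim : Tendsto ξ atTop (𝓝 x)) (hC : 0 < C) (hγ : 0 < γ) (hγ' : γ < 1 / 2)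
    (hL : ∀ u ∈ Ici s, LojasiewiczInequality F x C γ (ξ u)) :
    (fun t ↦ ξ t - x) =O[atTop] fun t ↦ t ^ (-(γ / (1 - 2 * γ))) := by
  have hlow : ∀ u ∈ Ici s, F x ≤ F (ξ u) := fun u ↦
    hξ.le_energy_of_mapClusterPt hF hlim.mapClusterPt
  have henergy : (fun t ↦ F (ξ t) - F x) =O[atTop] fun t ↦ t ^ (-(1 - 2 * γ)⁻¹) :=
    isBigO_rpow_of_deriv_le_neg_mul_rpow (k := (C ^ 2)⁻¹) (by positivity) (by linarith)
      (fun t ht ↦ hξ.hasDerivWithinAt_energy hF ht (F x)) (fun t ht ↦ sub_nonneg.2 (hlow t ht))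
      fun t ht ↦ by
        rw [show 1 + (1 - 2 * γ) = 2 * (1 - γ) by ring, neg_mul]
        exact neg_le_neg ((hL t ht).rpow_le_norm_gradient_sq (hlow t ht) hC)
  refine (hξ.isBigO_rpow_energy hF hlim hC.le hγ hL).trans <|
    (henergy.rpow hγ.le ?_).congr' .rfl ?_
  · filter_upwards [eventually_ge_atTop 0] with t ht using Real.rpow_nonneg ht _
  · filter_upwards [eventually_ge_atTop 0] with t ht
    rw [← Real.rpow_mul ht, neg_mul, inv_mul_eq_div]

theorem isBigO_exp (hξ : IsGradientFlowOn F ξ (Ici s)) (hF : Differentiable ℝ F)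
    (hlim : Tendsto ξ atTop (𝓝 x)) (hC : 0 < C)
    (hL : ∀ u ∈ Ici s, LojasiewiczInequality F x C (1 / 2) (ξ u)) :
    (fun t ↦ ξ t - x) =O[atTop] fun t ↦ Real.exp (-((2 * C ^ 2)⁻¹ * t)) := by
  have hlow : ∀ u ∈ Ici s, F x ≤ F (ξ u) := fun u ↦
    hξ.le_energy_of_mapClusterPt hF hlim.mapClusterPt
  have henergy : (fun t ↦ F (ξ t) - F x) =O[atTop] fun t ↦ Real.exp (-((C ^ 2)⁻¹ * t)) :=
    isBigO_exp_of_deriv_le_neg_mul (fun t ht ↦ hξ.hasDerivWithinAt_energy hF ht (F x))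
      (fun t ht ↦ sub_nonneg.2 (hlow t ht)) fun t ht ↦ by
        have hgrad := (hL t ht).rpow_le_norm_gradient_sq (hlow t ht) hC
        rw [show 2 * (1 - 1 / 2) = (1 : ℝ) by norm_num, Real.rpow_one] at hgrad
        simpa only [neg_mul] using neg_le_neg hgrad
  refine (hξ.isBigO_rpow_energy hF hlim hC.le one_half_pos hL).trans <|
    (henergy.rpow one_half_pos.le (.of_forall fun t ↦ Real.exp_nonneg _)).congr_right fun t ↦ ?_
  rw [← Real.exp_mul]
  congr 1
  field_simp

lemma exists_tail_lojasiewiczInequality (hξ : IsGradientFlowOn F ξ (Ici s))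
    (hlim : Tendsto ξ atTop (𝓝 x)) (hL : ∀ᶠ z in 𝓝 x, LojasiewiczInequality F x C γ z) :
    ∃ T, IsGradientFlowOn F ξ (Ici T) ∧ ∀ u ∈ Ici T, LojasiewiczInequality F x C γ (ξ u) := by
  obtain ⟨T, hT⟩ := eventually_atTop.1 ((eventually_ge_atTop s).and (hlim.eventually hL))
  exact ⟨T, hξ.mono (Ici_subset_Ici.2 (hT T le_rfl).1), fun u hu ↦ (hT u hu).2⟩

theorem exists_norm_sub_le_mul_rpow (hξ : IsGradientFlowOn F ξ (Ici s)) (hF : Differentiable ℝ F)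
    (hs : 0 < s) (hlim : Tendsto ξ atTop (𝓝 x)) (hC : 0 < C) (hγ : 0 < γ) (hγ' : γ < 1 / 2)
    (hL : ∀ᶠ z in 𝓝 x, LojasiewiczInequality F x C γ z) :
    ∃ C' > 0, ∀ t ∈ Ici s, ‖ξ t - x‖ ≤ C' * t ^ (-(γ / (1 - 2 * γ))) := by
  obtain ⟨T, htail, hLtail⟩ := hξ.exists_tail_lojasiewiczInequality hlim hL
  exact exists_forall_norm_le_mul_of_isBigO (hξ.continuousOn.sub continuousOn_const)
    (continuousOn_id.rpow_const fun t ht ↦ Or.inl (hs.trans_le ht).ne')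
    (fun t ht ↦ Real.rpow_pos_of_pos (hs.trans_le ht) _)
    (htail.isBigO_rpow hF hlim hC hγ hγ' hLtail)

theorem exists_norm_sub_le_mul_exp (hξ : IsGradientFlowOn F ξ (Ici s)) (hF : Differentiable ℝ F)
    (hlim : Tendsto ξ atTop (𝓝 x)) (hC : 0 < C)
    (hL : ∀ᶠ z in 𝓝 x, LojasiewiczInequality F x C (1 / 2) z) :
    ∃ C' > 0, ∀ t ∈ Ici s, ‖ξ t - x‖ ≤ C' * Real.exp (-((2 * C ^ 2)⁻¹ * t)) := by
  obtain ⟨T, htail, hLtail⟩ := hξ.exists_tail_lojasiewiczInequality hlim hL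
  exact exists_forall_norm_le_mul_of_isBigO (hξ.continuousOn.sub continuousOn_const)
    (by fun_prop) (fun t _ ↦ Real.exp_pos _) (htail.isBigO_exp hF hlim hC hLtail)

end IsGradientFlowOn

theorem loja_decay_rate_gradient_flow_general (hF : ContDiff ℝ 1 F)
    (hξ : IsGradientFlowOn F ξ (Ioi 0)) (hx : MapClusterPt x atTop ξ)
    (hLoja : gradient F x = 0 → ∃ U : Set E, IsOpen U ∧ x ∈ U ∧
      ∃ C > (0 : ℝ), ∃ γ ∈ Ioc (0 : ℝ) (1 / 2), ∀ z ∈ U, LojasiewiczInequality F x C γ z) :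
    Tendsto ξ atTop (𝓝 x) ∧ gradient F x = 0 ∧
      ∀ (U : Set E) (C γ : ℝ), IsOpen U → x ∈ U → 0 < C → γ ∈ Ioc (0 : ℝ) (1 / 2) →
        (∀ z ∈ U, LojasiewiczInequality F x C γ z) →
        ∃ C' > (0 : ℝ), ∃ c > (0 : ℝ),
          (γ < 1 / 2 → ∀ t : ℝ, 1 ≤ t → ‖ξ t - x‖ ≤ C' * t ^ (-(γ / (1 - 2 * γ)))) ∧
          (γ = 1 / 2 → ∀ t : ℝ, 1 ≤ t → ‖ξ t - x‖ ≤ C' * Real.exp (-(c * t))) := by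
  have hdiff : Differentiable ℝ F := hF.differentiable one_ne_zero
  have hflow : IsGradientFlowOn F ξ (Ici 1) := hξ.mono (Ici_subset_Ioi.2 one_pos)
  have hnear : ∃ C > 0, ∃ γ > 0, ∀ᶠ z in 𝓝 x, LojasiewiczInequality F x C γ z := by
    by_cases hcrit : gradient F x = 0
    · obtain ⟨U, hU, hxU, C, hC, γ, hγ, hL⟩ := hLoja hcrit
      exact ⟨C, hC, γ, hγ.1, mem_of_superset (hU.mem_nhds hxU) hL⟩
    · exact ⟨1, one_pos, 1 / 2, one_half_pos,
        LojasiewiczInequality.eventually_of_gradient_ne_zero hF hcrit one_pos one_half_lt_one⟩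
  obtain ⟨C₀, hC₀, γ₀, hγ₀, hL₀⟩ := hnear
  have hlim : Tendsto ξ atTop (𝓝 x) := hflow.tendsto_of_mapClusterPt hdiff hx hC₀.le hγ₀ hL₀
  refine ⟨hlim, hflow.gradient_eq_zero_of_tendsto hF hlim, fun U C γ hU hxU hC hγ hL ↦ ?_⟩
  have hLx : ∀ᶠ z in 𝓝 x, LojasiewiczInequality F x C γ z :=
    mem_of_superset (hU.mem_nhds hxU) hL
  rcases hγ.2.lt_or_eq with hlt | rfl
  · obtain ⟨C', hC', hbound⟩ :=
      hflow.exists_norm_sub_le_mul_rpow hdiff one_pos hlim hC hγ.1 hlt hLx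
    exact ⟨C', hC', 1, one_pos, fun _ ↦ hbound, fun heq ↦ absurd heq hlt.ne⟩
  · obtain ⟨C', hC', hbound⟩ := hflow.exists_norm_sub_le_mul_exp hdiff hlim hC hLx
    exact ⟨C', hC', (2 * C ^ 2)⁻¹, by positivity, fun h ↦ absurd h (lt_irrefl _), fun _ ↦ hbound⟩

end GradientFlow

/-- **Łojasiewicz decay-rate condition for gradient flows in ℝ^N.**
If `F : ℝ^N → ℝ` is `C¹` and satisfies the Łojasiewicz inequality at every critical point,
then every bounded solution of the gradient flow `ξ' = -∇F(ξ)` on `[0, ∞)` converges to a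
critical point `ξ∞`, with rate `t^(-γ/(1-2γ))` if the Łojasiewicz exponent `γ` at `ξ∞`
satisfies `γ < 1/2`, and exponential rate if `γ = 1/2`. -/
theorem loja_decay_rate_gradient_flow
    (N : ℕ) (F : EuclideanSpace ℝ (Fin N) → ℝ) (hF : ContDiff ℝ 1 F)
    (hLoja : ∀ ξbar : EuclideanSpace ℝ (Fin N), gradient F ξbar = 0 →
      ∃ U : Set (EuclideanSpace ℝ (Fin N)), IsOpen U ∧ ξbar ∈ U ∧
        ∃ C > (0:ℝ), ∃ γ ∈ Ioc (0:ℝ) (1/2),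
          ∀ ζ ∈ U, |F ζ - F ξbar| ^ (1 - γ) ≤ C * ‖gradient F ζ‖)
    (ξ : ℝ → EuclideanSpace ℝ (Fin N))
    (hcont : ContinuousOn ξ (Ici 0))
    (hode : ∀ t : ℝ, 0 < t → HasDerivAt ξ (-gradient F (ξ t)) t)
    (hbdd : ∃ Kc : Set (EuclideanSpace ℝ (Fin N)), IsCompact Kc ∧ ∀ t : ℝ, 0 ≤ t → ξ t ∈ Kc) :
    ∃ ξinf : EuclideanSpace ℝ (Fin N),
      Tendsto ξ atTop (𝓝 ξinf) ∧ gradient F ξinf = 0 ∧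
      ∀ (U : Set (EuclideanSpace ℝ (Fin N))) (C γ : ℝ),
        IsOpen U → ξinf ∈ U → 0 < C → γ ∈ Ioc (0:ℝ) (1/2) →
        (∀ ζ ∈ U, |F ζ - F ξinf| ^ (1 - γ) ≤ C * ‖gradient F ζ‖) →
        ∃ C' > (0:ℝ), ∃ c > (0:ℝ),
          (γ < 1/2 → ∀ t : ℝ, 1 ≤ t → ‖ξ t - ξinf‖ ≤ C' * t ^ (-(γ / (1 - 2*γ)))) ∧
          (γ = 1/2 → ∀ t : ℝ, 1 ≤ t → ‖ξ t - ξinf‖ ≤ C' * Real.exp (-(c * t))) := by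
  obtain ⟨K, hK, hξK⟩ := hbdd
  obtain ⟨x, -, hx⟩ := hK.exists_mapClusterPt <|
    tendsto_principal.2 ((eventually_ge_atTop 0).mono hξK)
  exact ⟨x, loja_decay_rate_gradient_flow_general hF
    (fun t ht ↦ (hode t ht).hasDerivWithinAt) hx (hLoja x)⟩
end

section
/- There is a constant C > 0, depending only on the dimension d, such that the following holds. Let u be of class C² on the closed unit ball closure(B₁) ⊂ ℝ^d, and let h be of class C¹ on closure(B₁), harmonic in B₁ (Δh = 0 in B₁), with h = u on ∂B₁. Then ∫_{B₁} |∇u|² dx − ∫_{B₁} |∇h|² dx ≤ C ∫_{B₁} |Δu|² dx. -/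
open MeasureTheory

/-- The Laplacian of `u : ℝ^d → ℝ`, as the sum of the pure second derivatives
in the coordinate directions (junk value where `u` is not twice differentiable). -/
noncomputable def lapl {d : ℕ} (u : EuclideanSpace ℝ (Fin d) → ℝ)
    (x : EuclideanSpace ℝ (Fin d)) : ℝ :=
  ∑ i : Fin d, iteratedFDeriv ℝ 2 u x ![EuclideanSpace.single i 1, EuclideanSpace.single i 1]

/-!
The difference `w = u - h` vanishes on the boundary and satisfies `Δw = Δu`. As `h` is harmonic,
`∇w` and `∇h` are orthogonal in `L²`, so the energy gap is `∫ |∇w|² = -∫ w Δu`. Young's inequality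
and the Poincaré inequality for `w` absorb the factor `w`.

Integration by parts needs no regularity of the boundary and no control of `D²h` there: for a vector
field `X` the field `T_ε(w) X`, where `T_ε` truncates small values to zero, has compact support in
the domain, so its divergence integrates to zero. Letting `ε → 0` gives
`∫ ∇w · X + w div X = 0`, because `∇w = 0` almost everywhere on `{w = 0}`.
-/

open Filter Metric Set Topology
open scoped ENNReal Gradient InnerProductSpace Laplacian

section Truncation

/-- A smooth truncation of the identity of `ℝ` at height `ε`: it vanishes on `[-ε, ε]` and is the
identity outside `[-2ε, 2ε]`. Composing with it turns a function with zero boundary values into one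
with compact support. -/
noncomputable def truncation (ε t : ℝ) : ℝ :=
  t * Real.smoothTransition ((t / ε) ^ 2 - 1)

variable {ε t : ℝ}

lemma contDiff_truncation (ε : ℝ) : ContDiff ℝ 1 (truncation ε) :=
  contDiff_id.mul <| Real.smoothTransition.contDiff.comp <|
    ((contDiff_id.div_const ε).pow 2).sub contDiff_const

lemma truncation_eq_zero (hε : 0 < ε) (ht : |t| ≤ ε) : truncation ε t = 0 := by
  have : (t / ε) ^ 2 ≤ 1 := by
    rw [sq_le_one_iff_abs_le_one, abs_div, abs_of_pos hε]
    exact div_le_one_of_le₀ ht hε.le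
  rw [truncation, Real.smoothTransition.zero_of_nonpos (by linarith), mul_zero]

lemma truncation_eq_self (hε : 0 < ε) (ht : 2 * ε ≤ |t|) : truncation ε t = t := by
  have : 2 ^ 2 ≤ (t / ε) ^ 2 := by
    rw [sq_le_sq, abs_div, abs_two, abs_of_pos hε]
    exact (le_div_iff₀ hε).mpr ht
  rw [truncation, Real.smoothTransition.one_of_one_le (by linarith), mul_one]

lemma abs_truncation_le (ε t : ℝ) : |truncation ε t| ≤ |t| := by
  rw [truncation, abs_mul, abs_of_nonneg (Real.smoothTransition.nonneg _)]
  exact mul_le_of_le_one_right (abs_nonneg t) (Real.smoothTransition.le_one _)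

lemma truncation_eventuallyEq_id (hε : 0 < ε) (ht : 2 * ε < |t|) : truncation ε =ᶠ[𝓝 t] id := by
  filter_upwards [continuous_abs.continuousAt.eventually_const_lt ht] with s hs
  exact truncation_eq_self hε hs.le

lemma deriv_truncation_eq_one (hε : 0 < ε) (ht : 2 * ε < |t|) : deriv (truncation ε) t = 1 := by
  rw [(truncation_eventuallyEq_id hε ht).deriv_eq, deriv_id]

lemma deriv_truncation (hε : ε ≠ 0) (t : ℝ) :
    deriv (truncation ε) t = deriv (truncation 1) (t / ε) := by
  have hscale : truncation ε = fun s => ε * truncation 1 (ε⁻¹ * s) := by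
    ext s
    simp only [truncation, div_one]
    field_simp
  rw [hscale, deriv_const_mul_field, deriv_comp_mul_left, smul_eq_mul, mul_inv_cancel_left₀ hε,
    inv_mul_eq_div]

lemma exists_abs_deriv_truncation_le :
    ∃ K, ∀ ε > 0, ∀ t, |deriv (truncation ε) t| ≤ K := by
  obtain ⟨K, hK⟩ := (isCompact_Icc (a := (-2 : ℝ)) (b := 2)).exists_bound_of_continuousOn
    ((contDiff_truncation 1).continuous_deriv le_rfl).continuousOn
  refine ⟨max K 1, fun ε hε t => ?_⟩
  rw [deriv_truncation hε.ne']
  rcases le_or_gt |t / ε| 2 with h | h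
  · exact (hK _ (abs_le.mp h)).trans (le_max_left K 1)
  · rw [deriv_truncation_eq_one one_pos (by linarith), abs_one]
    exact le_max_right K 1

lemma eventually_two_mul_lt_abs (ht : t ≠ 0) : ∀ᶠ ε in 𝓝[>] (0 : ℝ), 0 < ε ∧ 2 * ε < |t| := by
  filter_upwards [Ioo_mem_nhdsGT (half_pos (abs_pos.mpr ht))] with ε hε
  exact ⟨hε.1, by linarith [hε.2]⟩

lemma tendsto_truncation (t : ℝ) : Tendsto (truncation · t) (𝓝[>] 0) (𝓝 t) := by
  rcases eq_or_ne t 0 with rfl | ht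
  · simp [truncation]
  · refine tendsto_const_nhds.congr' ?_
    filter_upwards [eventually_two_mul_lt_abs ht] with ε hε
    exact (truncation_eq_self hε.1 hε.2.le).symm

lemma tendsto_deriv_truncation (ht : t ≠ 0) :
    Tendsto (fun ε => deriv (truncation ε) t) (𝓝[>] 0) (𝓝 1) := by
  refine tendsto_const_nhds.congr' ?_
  filter_upwards [eventually_two_mul_lt_abs ht] with ε hε
  exact (deriv_truncation_eq_one hε.1 hε.2).symm

end Truncation

lemma contDiff_indicator {E F : Type*} [NormedAddCommGroup E] [NormedSpace ℝ E]
    [NormedAddCommGroup F] [NormedSpace ℝ F] {n : WithTop ℕ∞} {Ω K : Set E} {X : E → F}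
    (hΩ : IsOpen Ω) (hX : ContDiffOn ℝ n X Ω) (hK : IsClosed K) (hKΩ : K ⊆ Ω)
    (hXK : ∀ x ∈ Ω \ K, X x = 0) : ContDiff ℝ n (Ω.indicator X) := by
  refine contDiff_iff_contDiffAt.mpr fun x => ?_
  by_cases hx : x ∈ Ω
  · exact (hX.contDiffAt (hΩ.mem_nhds hx)).congr_of_eventuallyEq
      (eventuallyEq_of_mem (hΩ.mem_nhds hx) eqOn_indicator)
  · refine (contDiffAt_const (c := 0)).congr_of_eventuallyEq ?_
    filter_upwards [hK.isOpen_compl.mem_nhds fun h => hx (hKΩ h)] with y hy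
    exact indicator_apply_eq_zero.mpr fun hyΩ => hXK y ⟨hyΩ, hy⟩

section Divergence

variable {E : Type*} [NormedAddCommGroup E] [NormedSpace ℝ E] [FiniteDimensional ℝ E]
  {Ω : Set E} {X : E → E}

/-- The trace of an endomorphism of a finite-dimensional space, as a continuous linear form. -/
noncomputable def traceCLM (E : Type*) [NormedAddCommGroup E] [NormedSpace ℝ E]
    [FiniteDimensional ℝ E] : (E →L[ℝ] E) →L[ℝ] ℝ :=
  (LinearMap.trace ℝ E ∘ₗ ContinuousLinearMap.coeLM ℝ).toContinuousLinearMap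

/-- The divergence of a vector field, as the trace of its derivative (zero where the field is not
differentiable). -/
noncomputable def divergence (X : E → E) (x : E) : ℝ := traceCLM E (fderiv ℝ X x)

lemma divergence_congr {Y : E → E} {x : E} (h : X =ᶠ[𝓝 x] Y) :
    divergence X x = divergence Y x := by
  rw [divergence, divergence, h.fderiv_eq]

lemma divergence_const (v x : E) : divergence (fun _ => v) x = 0 := by simp [divergence]

lemma divergence_smul {f : E → ℝ} {x : E} (hf : DifferentiableAt ℝ f x)
    (hX : DifferentiableAt ℝ X x) :
    divergence (fun y => f y • X y) x = fderiv ℝ f x (X x) + f x * divergence X x := by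
  rw [divergence, fderiv_fun_smul hf hX, map_add, map_smul, smul_eq_mul, add_comm]
  congr 1
  exact LinearMap.trace_smulRight (fderiv ℝ f x : E →ₗ[ℝ] ℝ) (X x)

lemma continuousOn_divergence (hΩ : IsOpen Ω) (hX : ContDiffOn ℝ 1 X Ω) :
    ContinuousOn (divergence X) Ω :=
  (traceCLM E).continuous.comp_continuousOn (hX.continuousOn_fderiv_of_isOpen hΩ le_rfl)

variable [MeasurableSpace E] [BorelSpace E] {μ : Measure E} [μ.IsAddHaarMeasure]

lemma integral_fderiv_eq_zero {F : Type*} [NormedAddCommGroup F] [NormedSpace ℝ F]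
    [CompleteSpace F] {f : E → F} (hf : ContDiff ℝ 1 f) (hc : HasCompactSupport f) :
    ∫ x, fderiv ℝ f x ∂μ = 0 := by
  have hint : Integrable (fderiv ℝ f) μ :=
    (hf.continuous_fderiv one_ne_zero).integrable_of_hasCompactSupport (hc.fderiv ℝ)
  ext v
  rw [ContinuousLinearMap.integral_apply hint]
  simpa using integral_smul_fderiv_eq_neg_fderiv_smul_of_integrable (𝕜 := ℝ) (f := fun _ => 1)
    (g := f) (v := v) (μ := μ) (by simp) (by simpa using hint.apply_continuousLinearMap v)
    (by simpa using hf.continuous.integrable_of_hasCompactSupport hc)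
    (fun x _ => by fun_prop) (fun x _ => hf.differentiable one_ne_zero x)

lemma integral_divergence_eq_zero (hX : ContDiff ℝ 1 X) (hc : HasCompactSupport X) :
    ∫ x, divergence X x ∂μ = 0 := by
  have hint : Integrable (fderiv ℝ X) μ :=
    (hX.continuous_fderiv one_ne_zero).integrable_of_hasCompactSupport (hc.fderiv ℝ)
  simp only [divergence]
  rw [(traceCLM E).integral_comp_comm hint, integral_fderiv_eq_zero hX hc, map_zero]

lemma setIntegral_divergence_eq_zero {K : Set E} (hΩ : IsOpen Ω) (hX : ContDiffOn ℝ 1 X Ω)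
    (hK : IsCompact K) (hKΩ : K ⊆ Ω) (hXK : ∀ x ∈ Ω \ K, X x = 0) :
    ∫ x in Ω, divergence X x ∂μ = 0 := by
  have hzero : ∀ x ∉ K, Ω.indicator X x = 0 := fun x hx =>
    indicator_apply_eq_zero.mpr fun hxΩ => hXK x ⟨hxΩ, hx⟩
  have hin : ∀ x ∈ Ω, divergence X x = divergence (Ω.indicator X) x := fun x hx =>
    divergence_congr <| eventuallyEq_of_mem (hΩ.mem_nhds hx) eqOn_indicator.symm
  have hout : ∀ x ∉ Ω, divergence (Ω.indicator X) x = 0 := fun x hx => by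
    rw [divergence_congr <| eventuallyEq_of_mem
      (hK.isClosed.isOpen_compl.mem_nhds fun h => hx (hKΩ h)) hzero, divergence_const]
  calc ∫ x in Ω, divergence X x ∂μ
      = ∫ x in Ω, divergence (Ω.indicator X) x ∂μ :=
        setIntegral_congr_fun hΩ.measurableSet hin
    _ = ∫ x, divergence (Ω.indicator X) x ∂μ :=
        setIntegral_eq_integral_of_forall_compl_eq_zero hout
    _ = 0 := integral_divergence_eq_zero
        (contDiff_indicator hΩ hX hK.isClosed hKΩ hXK) (.intro hK hzero)

end Divergence

section ZeroBoundaryValues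

variable {E : Type*} [NormedAddCommGroup E] [NormedSpace ℝ E] {Ω : Set E} {w : E → ℝ} {X : E → E}
  {ε : ℝ}

/-- The function `w` is `C¹` in the open set `Ω`, continuous up to the boundary of `Ω`, and vanishes
there. Nothing is required of the derivative of `w` near the boundary. -/
structure HasZeroBoundaryValues (w : E → ℝ) (Ω : Set E) : Prop where
  contDiffOn : ContDiffOn ℝ 1 w Ω
  continuousOn : ContinuousOn w (closure Ω)
  eq_zero : ∀ x ∈ frontier Ω, w x = 0

namespace HasZeroBoundaryValues

lemma differentiableAt (hw : HasZeroBoundaryValues w Ω) (hΩ : IsOpen Ω) {x : E} (hx : x ∈ Ω) :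
    DifferentiableAt ℝ w x :=
  (hw.contDiffOn.contDiffAt (hΩ.mem_nhds hx)).differentiableAt one_ne_zero

lemma sep_le_abs_subset (hw : HasZeroBoundaryValues w Ω) (hΩ : IsOpen Ω) (hε : 0 < ε) :
    {x ∈ closure Ω | ε ≤ |w x|} ⊆ Ω := by
  rintro x ⟨hx, hwx⟩
  by_contra hxΩ
  rw [hw.eq_zero x (hΩ.frontier_eq ▸ ⟨hx, hxΩ⟩), abs_zero] at hwx
  exact hε.not_ge hwx

lemma sq (hw : HasZeroBoundaryValues w Ω) : HasZeroBoundaryValues (fun x => w x ^ 2) Ω where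
  contDiffOn := hw.contDiffOn.pow 2
  continuousOn := hw.continuousOn.pow 2
  eq_zero x hx := by rw [hw.eq_zero x hx, zero_pow two_ne_zero]

variable [FiniteDimensional ℝ E]

lemma isCompact_sep_le_abs (hw : HasZeroBoundaryValues w Ω) (hb : Bornology.IsBounded Ω) (ε : ℝ) :
    IsCompact {x ∈ closure Ω | ε ≤ |w x|} :=
  hb.isCompact_closure.of_isClosed_subset
    (hw.continuousOn.abs.preimage_isClosed_of_isClosed isClosed_closure isClosed_Ici)
    (sep_subset _ _)

variable [MeasurableSpace E] [BorelSpace E] (μ : Measure E) [μ.IsAddHaarMeasure]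

lemma setIntegral_truncation_eq_zero (hw : HasZeroBoundaryValues w Ω) (hΩ : IsOpen Ω)
    (hb : Bornology.IsBounded Ω) (hX : ContDiffOn ℝ 1 X Ω) (hε : 0 < ε) :
    ∫ x in Ω, deriv (truncation ε) (w x) * fderiv ℝ w x (X x) +
      truncation ε (w x) * divergence X x ∂μ = 0 := by
  have hT := contDiff_truncation ε
  have hXK : ∀ x ∈ Ω \ {x ∈ closure Ω | ε ≤ |w x|}, truncation ε (w x) • X x = 0 := by
    rintro x ⟨hx, hxK⟩
    have : |w x| ≤ ε := le_of_not_ge fun h => hxK ⟨subset_closure hx, h⟩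
    rw [truncation_eq_zero hε this, zero_smul]
  rw [← setIntegral_divergence_eq_zero (μ := μ) hΩ ((hT.comp_contDiffOn hw.contDiffOn).smul hX)
    (hw.isCompact_sep_le_abs hb ε) (hw.sep_le_abs_subset hΩ hε) hXK]
  refine setIntegral_congr_fun hΩ.measurableSet fun x hx => ?_
  have hTx := (hT.differentiable one_ne_zero (w x)).hasDerivAt
  have hTw := hTx.comp_hasFDerivAt x (hw.differentiableAt hΩ hx).hasFDerivAt
  have hXx := (hX.contDiffAt (hΩ.mem_nhds hx)).differentiableAt one_ne_zero
  exact ((divergence_smul hTw.differentiableAt hXx).trans (by rw [hTw.fderiv]; rfl)).symm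

end HasZeroBoundaryValues

lemma ae_eq_zero_of_hasFDerivWithinAt_of_eqOn_const [FiniteDimensional ℝ E] [MeasurableSpace E]
    [BorelSpace E] (μ : Measure E) [μ.IsAddHaarMeasure] {s : Set E} {c : ℝ} {w' : E → E →L[ℝ] ℝ}
    (hs : MeasurableSet s) (hw : ∀ x ∈ s, w x = c)
    (hw' : ∀ x ∈ s, HasFDerivWithinAt w (w' x) s x) :
    ∀ᵐ x ∂μ.restrict s, w' x = 0 := by
  rcases subsingleton_or_nontrivial E with hE | hE
  · exact .of_forall fun x => Subsingleton.elim _ _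
  · obtain ⟨v, hv⟩ := exists_ne (0 : E)
    have happrox : ApproximatesLinearOn (fun x => w x • v) (0 : E →L[ℝ] E) s 0 :=
      fun x hx y hy => by simp [hw x hx, hw y hy]
    filter_upwards [happrox.norm_fderiv_sub_le μ hs (fun x => (w' x).smulRight v)
      fun x hx => (hw' x hx).smul_const v] with x hx
    rw [sub_zero, nonpos_iff_eq_zero, nnnorm_eq_zero] at hx
    ext y
    simpa [hv] using DFunLike.congr_fun hx y

lemma ae_fderiv_eq_zero_of_eq_zero [FiniteDimensional ℝ E] [MeasurableSpace E] [BorelSpace E]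
    (μ : Measure E) [μ.IsAddHaarMeasure] (hΩ : IsOpen Ω) (hw : DifferentiableOn ℝ w Ω) :
    ∀ᵐ x ∂μ.restrict Ω, w x = 0 → fderiv ℝ w x = 0 := by
  have hs : MeasurableSet (Ω ∩ w ⁻¹' {0}) := by
    have : Ω ∩ w ⁻¹' {0} = Ω \ (Ω ∩ w ⁻¹' {0}ᶜ) := by ext; simp
    rw [this]
    exact hΩ.measurableSet.diff
      (hw.continuousOn.isOpen_inter_preimage hΩ isOpen_compl_singleton).measurableSet
  have h := ae_eq_zero_of_hasFDerivWithinAt_of_eqOn_const μ hs (fun x hx => hx.2) fun x hx =>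
    (hw.differentiableAt (hΩ.mem_nhds hx.1)).hasFDerivAt.hasFDerivWithinAt
  rw [ae_restrict_iff' hs] at h
  rw [ae_restrict_iff' hΩ.measurableSet]
  filter_upwards [h] with x hx hxΩ hwx using hx ⟨hxΩ, hwx⟩

namespace HasZeroBoundaryValues

variable [FiniteDimensional ℝ E] [MeasurableSpace E] [BorelSpace E] {μ : Measure E}
  [μ.IsAddHaarMeasure]

lemma setIntegral_fderiv_add_mul_divergence_eq_zero (hw : HasZeroBoundaryValues w Ω)
    (hΩ : IsOpen Ω) (hb : Bornology.IsBounded Ω) (hX : ContDiffOn ℝ 1 X Ω)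
    (hint₁ : IntegrableOn (fun x => fderiv ℝ w x (X x)) Ω μ)
    (hint₂ : IntegrableOn (fun x => w x * divergence X x) Ω μ) :
    ∫ x in Ω, fderiv ℝ w x (X x) + w x * divergence X x ∂μ = 0 := by
  obtain ⟨K, hK⟩ := exists_abs_deriv_truncation_le
  suffices hlim : Tendsto (fun ε => ∫ x in Ω, deriv (truncation ε) (w x) * fderiv ℝ w x (X x) +
      truncation ε (w x) * divergence X x ∂μ) (𝓝[>] 0)
      (𝓝 (∫ x in Ω, fderiv ℝ w x (X x) + w x * divergence X x ∂μ)) from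
    tendsto_nhds_unique hlim <| tendsto_const_nhds.congr' <|
      eventually_mem_nhdsWithin.mono fun ε hε =>
        (hw.setIntegral_truncation_eq_zero μ hΩ hb hX hε).symm
  refine tendsto_integral_filter_of_dominated_convergence
    (fun x => K * ‖fderiv ℝ w x (X x)‖ + ‖w x * divergence X x‖) ?_ ?_
    ((hint₁.norm.const_mul K).add hint₂.norm) ?_
  · have hw₀ := (hw.continuousOn.mono subset_closure).aestronglyMeasurable (μ := μ) hΩ.measurableSet
    have hdiv := (continuousOn_divergence hΩ hX).aestronglyMeasurable (μ := μ) hΩ.measurableSet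
    filter_upwards with ε
    have hT := contDiff_truncation ε
    exact (((hT.continuous_deriv le_rfl).comp_aestronglyMeasurable hw₀).mul
      hint₁.aestronglyMeasurable).add ((hT.continuous.comp_aestronglyMeasurable hw₀).mul hdiv)
  · filter_upwards [self_mem_nhdsWithin] with ε hε
    filter_upwards with x
    refine (norm_add_le _ _).trans (add_le_add ?_ ?_) <;> rw [norm_mul]
    · gcongr
      exact hK ε hε (w x)
    · rw [norm_mul]
      gcongr
      exact abs_truncation_le ε (w x)
  · filter_upwards [ae_fderiv_eq_zero_of_eq_zero μ hΩ
      (hw.contDiffOn.differentiableOn one_ne_zero)] with x hx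
    refine .add ?_ ((tendsto_truncation (w x)).mul_const _)
    rcases eq_or_ne (w x) 0 with h | h
    · simp [hx h]
    · simpa using (tendsto_deriv_truncation h).mul_const (fderiv ℝ w x (X x))

end HasZeroBoundaryValues

end ZeroBoundaryValues

section Poincare

lemma memLp_restrict_of_continuousOn_isCompact {α F : Type*} [TopologicalSpace α] [T2Space α]
    [MeasurableSpace α] [OpensMeasurableSpace α] [NormedAddCommGroup F] {f : α → F} {s K : Set α}
    {μ : Measure α} [IsFiniteMeasureOnCompacts μ] (p : ℝ≥0∞) (hf : ContinuousOn f K)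
    (hK : IsCompact K) (hsK : s ⊆ K) : MemLp f p (μ.restrict s) := by
  obtain ⟨C, hC⟩ := hK.exists_bound_of_continuousOn hf
  have : IsFiniteMeasure (μ.restrict K) := isFiniteMeasure_restrict.mpr hK.measure_lt_top.ne
  exact (MemLp.of_bound (hf.aestronglyMeasurable_of_isCompact hK hK.measurableSet) C
    (ae_restrict_of_forall_mem hK.measurableSet hC)).mono_measure (Measure.restrict_mono_set μ hsK)

variable {E : Type*} [NormedAddCommGroup E] [NormedSpace ℝ E] [FiniteDimensional ℝ E]
  [MeasurableSpace E] [BorelSpace E] {μ : Measure E} [μ.IsAddHaarMeasure] {Ω : Set E} {w : E → ℝ}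

lemma HasZeroBoundaryValues.memLp (hw : HasZeroBoundaryValues w Ω) (hb : Bornology.IsBounded Ω)
    (p : ℝ≥0∞) : MemLp w p (μ.restrict Ω) :=
  memLp_restrict_of_continuousOn_isCompact p hw.continuousOn hb.isCompact_closure
    subset_closure

lemma HasZeroBoundaryValues.setIntegral_sq_eq (hw : HasZeroBoundaryValues w Ω)
    (hΩ : IsOpen Ω) (hb : Bornology.IsBounded Ω) {ℓ : E →L[ℝ] ℝ} {v : E} (a : ℝ) (hv : ℓ v = 1)
    (hint : IntegrableOn (fun x => w x * (ℓ x - a) * fderiv ℝ w x v) Ω μ) :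
    ∫ x in Ω, w x ^ 2 ∂μ = -2 * ∫ x in Ω, w x * (ℓ x - a) * fderiv ℝ w x v ∂μ := by
  have hdiv (x : E) : divergence (fun y => (ℓ y - a) • v) x = 1 := by
    have hℓ : HasFDerivAt (fun y => ℓ y - a) ℓ x := ℓ.hasFDerivAt.sub_const a
    rw [divergence_smul hℓ.differentiableAt (differentiableAt_const v), divergence_const,
      hℓ.fderiv, hv, mul_zero, add_zero]
  have hfderiv : EqOn (fun x => 2 * (w x * (ℓ x - a) * fderiv ℝ w x v))
      (fun x => fderiv ℝ (fun y => w y ^ 2) x ((ℓ x - a) • v)) Ω := fun x hx => by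
    simp only [fderiv_fun_pow 2 (hw.differentiableAt hΩ hx), map_smul, smul_apply,
      smul_eq_mul]
    ring
  have hsq : IntegrableOn (fun x => w x ^ 2) Ω μ := (hw.memLp hb 2).integrable_sq
  have hparts := hw.sq.setIntegral_fderiv_add_mul_divergence_eq_zero (μ := μ)
    (X := fun x => (ℓ x - a) • v) hΩ hb
    ((ℓ.contDiff.sub contDiff_const).smul contDiff_const).contDiffOn
    (IntegrableOn.congr_fun (hint.const_mul 2) hfderiv hΩ.measurableSet) (by simpa [hdiv] using hsq)
  simp only [hdiv, mul_one] at hparts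
  rw [integral_add (IntegrableOn.congr_fun (hint.const_mul 2) hfderiv hΩ.measurableSet) hsq,
    ← setIntegral_congr_fun hΩ.measurableSet hfderiv, integral_const_mul] at hparts
  linarith

lemma HasZeroBoundaryValues.setIntegral_sq_le_of_slab (hw : HasZeroBoundaryValues w Ω)
    (hΩ : IsOpen Ω) (hb : Bornology.IsBounded Ω) {ℓ : E →L[ℝ] ℝ} {v : E} {a R : ℝ} (hv : ℓ v = 1)
    (hR : ∀ x ∈ Ω, |ℓ x - a| ≤ R) (hLp : MemLp (fun x => fderiv ℝ w x v) 2 (μ.restrict Ω)) :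
    ∫ x in Ω, w x ^ 2 ∂μ ≤ 4 * R ^ 2 * ∫ x in Ω, fderiv ℝ w x v ^ 2 ∂μ := by
  have hsq : IntegrableOn (fun x => w x ^ 2) Ω μ := (hw.memLp hb 2).integrable_sq
  have hDsq : IntegrableOn (fun x => 4 * R ^ 2 * fderiv ℝ w x v ^ 2) Ω μ :=
    hLp.integrable_sq.const_mul _
  have hint : IntegrableOn (fun x => w x * (ℓ x - a) * fderiv ℝ w x v) Ω μ :=
    (memLp_restrict_of_continuousOn_isCompact 2 (by have := hw.continuousOn; fun_prop)
      hb.isCompact_closure subset_closure).integrable_mul hLp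
  have hYoung : ∀ x ∈ Ω, -4 * (w x * (ℓ x - a) * fderiv ℝ w x v) ≤
      w x ^ 2 + 4 * R ^ 2 * fderiv ℝ w x v ^ 2 := fun x hx => by
    have hℓR : (ℓ x - a) ^ 2 ≤ R ^ 2 := sq_le_sq' (abs_le.mp (hR x hx)).1 (abs_le.mp (hR x hx)).2
    nlinarith [sq_nonneg (w x + 2 * (ℓ x - a) * fderiv ℝ w x v),
      mul_le_mul_of_nonneg_right hℓR (sq_nonneg (fderiv ℝ w x v))]
  have hmono := setIntegral_mono_on (hint.const_mul (-4)) (hsq.add hDsq) hΩ.measurableSet hYoung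
  rw [integral_add' hsq hDsq, integral_const_mul, integral_const_mul] at hmono
  linarith [hw.setIntegral_sq_eq hΩ hb a hv hint]

end Poincare

section Gradient

variable {E : Type*} [NormedAddCommGroup E] [InnerProductSpace ℝ E]

section

variable [CompleteSpace E] {u v : E → ℝ} {x : E}

lemma gradient_add (hu : DifferentiableAt ℝ u x) (hv : DifferentiableAt ℝ v x) :
    ∇ (u + v) x = ∇ u x + ∇ v x := by
  rw [gradient, fderiv_add hu hv, map_add, gradient, gradient]

lemma gradient_sub (hu : DifferentiableAt ℝ u x) (hv : DifferentiableAt ℝ v x) :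
    ∇ (u - v) x = ∇ u x - ∇ v x := by
  rw [gradient, fderiv_sub hu hv, map_sub, gradient, gradient]

end

variable [FiniteDimensional ℝ E] {u : E → ℝ} {x : E} {Ω : Set E}

lemma gradient_eq_sum {ι : Type*} [Fintype ι] (b : OrthonormalBasis ι ℝ E) (u : E → ℝ) :
    ∇ u = fun x => ∑ i, fderiv ℝ u x (b i) • b i := by
  ext1 x
  rw [← b.sum_repr' (∇ u x)]
  simp only [inner_gradient_right, conj_trivial]

lemma contDiffOn_gradient {m n : WithTop ℕ∞} (hu : ContDiffOn ℝ n u Ω) (hΩ : IsOpen Ω)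
    (hmn : m + 1 ≤ n) : ContDiffOn ℝ m (∇ u) Ω := by
  rw [gradient_eq_sum (stdOrthonormalBasis ℝ E)]
  exact ContDiffOn.sum fun i _ =>
    ((hu.fderiv_of_isOpen hΩ hmn).clm_apply contDiffOn_const).smul contDiffOn_const

lemma divergence_gradient (hu : ContDiffAt ℝ 2 u x) : divergence (∇ u) x = Δ u x := by
  set b := stdOrthonormalBasis ℝ E
  have hD : HasFDerivAt (fderiv ℝ u) (fderiv ℝ (fderiv ℝ u) x) x :=
    ((hu.fderiv_right le_rfl).differentiableAt one_ne_zero).hasFDerivAt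
  have hgrad : HasFDerivAt (∇ u)
      (∑ i, ((fderiv ℝ (fderiv ℝ u) x).flip (b i)).smulRight (b i)) x := by
    rw [gradient_eq_sum b]
    exact HasFDerivAt.fun_sum fun i _ =>
      ((ContinuousLinearMap.apply ℝ ℝ (b i)).hasFDerivAt.comp x hD).smul_const (b i)
  rw [divergence, hgrad.fderiv, map_sum,
    InnerProductSpace.laplacian_eq_iteratedFDeriv_orthonormalBasis u b]
  refine Finset.sum_congr rfl fun i _ => ?_
  rw [iteratedFDeriv_two_apply]
  exact LinearMap.trace_smulRight ((fderiv ℝ (fderiv ℝ u) x).flip (b i) : E →ₗ[ℝ] ℝ) (b i)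

end Gradient

section DirichletEnergy

variable {E : Type*} [NormedAddCommGroup E] [InnerProductSpace ℝ E]

lemma integrable_inner_of_memLp_two {α : Type*} [MeasurableSpace α] {μ : Measure α} {f g : α → E}
    (hf : MemLp f 2 μ) (hg : MemLp g 2 μ) : Integrable (fun x => ⟪f x, g x⟫_ℝ) μ :=
  (hf.norm.integrable_mul hg.norm).mono' (hf.1.inner hg.1)
    (.of_forall fun x => norm_inner_le_norm (f x) (g x))

variable [FiniteDimensional ℝ E] [MeasurableSpace E] [BorelSpace E] {μ : Measure E}
  [μ.IsAddHaarMeasure] {Ω : Set E} {u v w h : E → ℝ} {R : ℝ} {c : E}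

namespace HasZeroBoundaryValues

lemma setIntegral_inner_gradient (hw : HasZeroBoundaryValues w Ω) (hΩ : IsOpen Ω)
    (hb : Bornology.IsBounded Ω) (hv : ContDiffOn ℝ 2 v Ω) (hDw : MemLp (∇ w) 2 (μ.restrict Ω))
    (hDv : MemLp (∇ v) 2 (μ.restrict Ω)) (hwΔv : IntegrableOn (fun x => w x * Δ v x) Ω μ) :
    ∫ x in Ω, ⟪∇ w x, ∇ v x⟫_ℝ ∂μ = -∫ x in Ω, w x * Δ v x ∂μ := by
  have hdiv : EqOn (fun x => w x * Δ v x) (fun x => w x * divergence (∇ v) x) Ω := fun x hx => by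
    simp only [divergence_gradient (hv.contDiffAt (hΩ.mem_nhds hx))]
  have hinner := integrable_inner_of_memLp_two hDw hDv
  have hmul := IntegrableOn.congr_fun hwΔv hdiv hΩ.measurableSet
  simp only [inner_gradient_left] at hinner ⊢
  have hparts := hw.setIntegral_fderiv_add_mul_divergence_eq_zero hΩ hb
    (contDiffOn_gradient hv hΩ le_rfl) hinner hmul
  rw [integral_add hinner hmul, ← setIntegral_congr_fun hΩ.measurableSet hdiv] at hparts
  linarith

lemma setIntegral_norm_gradient_add_sq_of_harmonicOnNhd (hw : HasZeroBoundaryValues w Ω)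
    (hΩ : IsOpen Ω) (hb : Bornology.IsBounded Ω) (hh : InnerProductSpace.HarmonicOnNhd h Ω)
    (hDw : MemLp (∇ w) 2 (μ.restrict Ω)) (hDh : MemLp (∇ h) 2 (μ.restrict Ω)) :
    ∫ x in Ω, ‖∇ (w + h) x‖ ^ 2 ∂μ = ∫ x in Ω, ‖∇ w x‖ ^ 2 ∂μ + ∫ x in Ω, ‖∇ h x‖ ^ 2 ∂μ := by
  have hΔ : EqOn (fun x => w x * Δ h x) 0 Ω := fun x hx => by simp [(hh x hx).2.eq_of_nhds]
  have horth : ∫ x in Ω, ⟪∇ w x, ∇ h x⟫_ℝ ∂μ = 0 := by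
    rw [hw.setIntegral_inner_gradient hΩ hb hh.contDiffOn hDw hDh
      (integrableOn_zero.congr_fun hΔ.symm hΩ.measurableSet),
      setIntegral_congr_fun hΩ.measurableSet hΔ]
    simp
  have hexpand : EqOn (fun x => ‖∇ (w + h) x‖ ^ 2)
      (fun x => ‖∇ w x‖ ^ 2 + ‖∇ h x‖ ^ 2 + 2 * ⟪∇ w x, ∇ h x⟫_ℝ) Ω := fun x hx => by
    simp only [gradient_add (hw.differentiableAt hΩ hx) ((hh x hx).1.differentiableAt two_ne_zero),
      norm_add_sq_real]
    ring
  have hDw_sq : IntegrableOn (fun x => ‖∇ w x‖ ^ 2) Ω μ := hDw.integrable_norm_pow two_ne_zero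
  have hDh_sq : IntegrableOn (fun x => ‖∇ h x‖ ^ 2) Ω μ := hDh.integrable_norm_pow two_ne_zero
  have hsum : IntegrableOn (fun x => ‖∇ w x‖ ^ 2 + ‖∇ h x‖ ^ 2) Ω μ := hDw_sq.add hDh_sq
  rw [setIntegral_congr_fun hΩ.measurableSet hexpand,
    integral_add hsum ((integrable_inner_of_memLp_two hDw hDh).const_mul 2),
    integral_add hDw_sq hDh_sq, integral_const_mul, horth, mul_zero, add_zero]

lemma setIntegral_sq_le_setIntegral_norm_gradient_sq [Nontrivial E]
    (hw : HasZeroBoundaryValues w Ω) (hΩ : IsOpen Ω) (hΩR : Ω ⊆ closedBall c R)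
    (hDw : MemLp (∇ w) 2 (μ.restrict Ω)) :
    ∫ x in Ω, w x ^ 2 ∂μ ≤ 4 * R ^ 2 * ∫ x in Ω, ‖∇ w x‖ ^ 2 ∂μ := by
  obtain ⟨e, he⟩ := exists_norm_eq E zero_le_one
  have hslab : ∀ x ∈ Ω, |innerSL ℝ e x - inner ℝ e c| ≤ R := fun x hx => by
    rw [innerSL_apply_apply, ← inner_sub_right]
    simpa [he] using (abs_real_inner_le_norm e (x - c)).trans
      (mul_le_mul_of_nonneg_left (mem_closedBall_iff_norm.mp <| hΩR hx) (norm_nonneg e))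
  have hle (x : E) : fderiv ℝ w x e ^ 2 ≤ ‖∇ w x‖ ^ 2 := by
    rw [← inner_gradient_left, ← sq_abs]
    gcongr
    simpa [he] using abs_real_inner_le_norm (∇ w x) e
  have hLp : MemLp (fun x => fderiv ℝ w x e) 2 (μ.restrict Ω) := by
    simpa only [inner_gradient_left] using hDw.inner_const (𝕜 := ℝ) e
  refine (hw.setIntegral_sq_le_of_slab hΩ (isBounded_closedBall.subset hΩR) (by simp [he]) hslab
    hLp).trans (mul_le_mul_of_nonneg_left ?_ (by positivity))
  exact integral_mono hLp.integrable_sq (hDw.integrable_norm_pow two_ne_zero) hle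

lemma setIntegral_norm_gradient_sq_le (hw : HasZeroBoundaryValues w Ω) (hΩ : IsOpen Ω) (hR : 0 < R)
    (hΩR : Ω ⊆ closedBall c R) (hw₂ : ContDiffOn ℝ 2 w Ω) (hDw : MemLp (∇ w) 2 (μ.restrict Ω))
    (hΔw : MemLp (Δ w) 2 (μ.restrict Ω)) :
    ∫ x in Ω, ‖∇ w x‖ ^ 2 ∂μ ≤ 4 * R ^ 2 * ∫ x in Ω, Δ w x ^ 2 ∂μ := by
  rcases subsingleton_or_nontrivial E with hE | hE
  · simp only [Subsingleton.elim (∇ w _) 0, norm_zero, zero_pow two_ne_zero, integral_zero]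
    positivity
  have hb : Bornology.IsBounded Ω := isBounded_closedBall.subset hΩR
  have hwLp := hw.memLp hb (μ := μ) 2
  have hmul : IntegrableOn (fun x => w x * Δ w x) Ω μ := hwLp.integrable_mul hΔw
  have hw_sq : IntegrableOn (fun x => w x ^ 2 / (8 * R ^ 2)) Ω μ := hwLp.integrable_sq.div_const _
  have hΔw_sq : IntegrableOn (fun x => 2 * R ^ 2 * Δ w x ^ 2) Ω μ := hΔw.integrable_sq.const_mul _
  have hYoung (x : E) : -(w x * Δ w x) ≤ w x ^ 2 / (8 * R ^ 2) + 2 * R ^ 2 * Δ w x ^ 2 := by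
    have : w x ^ 2 / (8 * R ^ 2) + 2 * R ^ 2 * Δ w x ^ 2 + w x * Δ w x =
        (w x + 4 * R ^ 2 * Δ w x) ^ 2 / (8 * R ^ 2) := by
      field_simp
      ring
    have : 0 ≤ (w x + 4 * R ^ 2 * Δ w x) ^ 2 / (8 * R ^ 2) := by positivity
    linarith
  have hGreen := hw.setIntegral_inner_gradient hΩ hb hw₂ hDw hDw hmul
  simp only [real_inner_self_eq_norm_sq] at hGreen
  have hPoincare := hw.setIntegral_sq_le_setIntegral_norm_gradient_sq hΩ hΩR hDw
  have hmono := integral_mono hmul.neg (hw_sq.add hΔw_sq) hYoung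
  rw [integral_neg', ← hGreen, integral_add' hw_sq hΔw_sq, integral_div,
    integral_const_mul] at hmono
  have : (∫ x in Ω, w x ^ 2 ∂μ) / (8 * R ^ 2) ≤ (∫ x in Ω, ‖∇ w x‖ ^ 2 ∂μ) / 2 := by
    rw [div_le_div_iff₀ (by positivity) two_pos]
    linarith
  linarith

end HasZeroBoundaryValues

end DirichletEnergy

lemma uniqueDiffOn_closedBall {E : Type*} [NormedAddCommGroup E] [NormedSpace ℝ E] (c : E) {r : ℝ}
    (hr : 0 < r) : UniqueDiffOn ℝ (closedBall c r) :=
  uniqueDiffOn_convex (convex_closedBall c r)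
    ((nonempty_ball.mpr hr).mono ball_subset_interior_closedBall)

lemma harmonicContOnCl_of_laplacian_eq_zero {E : Type*} [NormedAddCommGroup E]
    [InnerProductSpace ℝ E] [FiniteDimensional ℝ E] {h : E → ℝ} {Ω : Set E} (hΩ : IsOpen Ω)
    (hh : ContDiffOn ℝ 2 h Ω) (hc : ContinuousOn h (closure Ω)) (hΔ : ∀ x ∈ Ω, Δ h x = 0) :
    InnerProductSpace.HarmonicContOnCl h Ω :=
  ⟨fun _ hx => ⟨hh.contDiffAt (hΩ.mem_nhds hx), eventuallyEq_of_mem (hΩ.mem_nhds hx) hΔ⟩, hc⟩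

section CompactDomain

variable {E : Type*} [NormedAddCommGroup E] [InnerProductSpace ℝ E] {u : E → ℝ} {K s : Set E}

section

variable [CompleteSpace E]

lemma continuousOn_gradientWithin (hK : UniqueDiffOn ℝ K) (hu : ContDiffOn ℝ 1 u K) :
    ContinuousOn (gradientWithin u K) K :=
  (InnerProductSpace.toDual ℝ E).symm.continuous.comp_continuousOn
    (hu.continuousOn_fderivWithin hK le_rfl)

lemma gradientWithin_of_mem_nhds {x : E} (hx : K ∈ 𝓝 x) : gradientWithin u K x = ∇ u x := by
  rw [gradientWithin, fderivWithin_of_mem_nhds hx, gradient]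

lemma memLp_gradient_of_contDiffOn [MeasurableSpace E] [BorelSpace E] {μ : Measure E}
    [IsFiniteMeasureOnCompacts μ] (p : ℝ≥0∞) (hK : IsCompact K) (hK' : UniqueDiffOn ℝ K)
    (hu : ContDiffOn ℝ 1 u K) (hs : IsOpen s) (hsK : s ⊆ K) : MemLp (∇ u) p (μ.restrict s) :=
  (memLp_congr_ae <| ae_restrict_of_forall_mem hs.measurableSet fun _ hx =>
    gradientWithin_of_mem_nhds (mem_of_superset (hs.mem_nhds hx) hsK)).mp <|
  memLp_restrict_of_continuousOn_isCompact p (continuousOn_gradientWithin hK' hu) hK hsK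

end

variable [FiniteDimensional ℝ E]

lemma continuousOn_laplacianWithin (hK : UniqueDiffOn ℝ K) (hu : ContDiffOn ℝ 2 u K) :
    ContinuousOn (Δ[K] u) K := by
  refine ContinuousOn.congr ?_ fun x hx =>
    InnerProductSpace.laplacianWithin_eq_iteratedFDerivWithin_stdOrthonormalBasis u hK hx
  exact continuousOn_finsetSum _ fun i _ =>
    (hu.continuousOn_iteratedFDerivWithin le_rfl hK).eval_const _

lemma laplacianWithin_of_mem_nhds {x : E} (hx : K ∈ 𝓝 x) : (Δ[K] u) x = Δ u x := by
  have hfderiv : fderivWithin ℝ u K =ᶠ[𝓝 x] fderiv ℝ u :=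
    (eventually_mem_nhds_iff.mpr hx).mono fun y hy => fderivWithin_of_mem_nhds hy
  rw [← InnerProductSpace.laplacianWithin_univ]
  simp only [InnerProductSpace.laplacianWithin, tensorIteratedFDerivWithinTwo,
    bilinearIteratedFDerivWithinTwo, fderivWithin_univ, fderivWithin_of_mem_nhds hx,
    hfderiv.fderiv_eq]

lemma memLp_laplacian_of_contDiffOn [MeasurableSpace E] [BorelSpace E] {μ : Measure E}
    [IsFiniteMeasureOnCompacts μ] (p : ℝ≥0∞) (hK : IsCompact K) (hK' : UniqueDiffOn ℝ K)
    (hu : ContDiffOn ℝ 2 u K) (hs : IsOpen s) (hsK : s ⊆ K) : MemLp (Δ u) p (μ.restrict s) :=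
  (memLp_congr_ae <| ae_restrict_of_forall_mem hs.measurableSet fun _ hx =>
    laplacianWithin_of_mem_nhds (mem_of_superset (hs.mem_nhds hx) hsK)).mp <|
  memLp_restrict_of_continuousOn_isCompact p (continuousOn_laplacianWithin hK' hu) hK hsK

end CompactDomain

lemma lapl_eq_laplacian {d : ℕ} (u : EuclideanSpace ℝ (Fin d) → ℝ) : lapl u = Δ u := by
  ext x
  simp [lapl, InnerProductSpace.laplacian_eq_iteratedFDeriv_orthonormalBasis u
    (EuclideanSpace.basisFun (Fin d) ℝ)]

theorem loja_dirichlet_energy_general {E : Type*} [NormedAddCommGroup E] [InnerProductSpace ℝ E]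
    [FiniteDimensional ℝ E] [MeasurableSpace E] [BorelSpace E] {μ : Measure E}
    [μ.IsAddHaarMeasure] {Ω : Set E} {c : E} {R : ℝ} (hΩ : IsOpen Ω) (hR : 0 < R)
    (hΩR : Ω ⊆ closedBall c R) {u h : E → ℝ} (hu : ContDiffOn ℝ 2 u Ω)
    (hu_cont : ContinuousOn u (closure Ω)) (hh : InnerProductSpace.HarmonicContOnCl h Ω)
    (hhu : EqOn h u (frontier Ω)) (hDu : MemLp (∇ u) 2 (μ.restrict Ω))
    (hDh : MemLp (∇ h) 2 (μ.restrict Ω)) (hΔu : MemLp (Δ u) 2 (μ.restrict Ω)) :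
    ∫ x in Ω, ‖∇ u x‖ ^ 2 ∂μ - ∫ x in Ω, ‖∇ h x‖ ^ 2 ∂μ ≤ 4 * R ^ 2 * ∫ x in Ω, Δ u x ^ 2 ∂μ := by
  have hh₂ := hh.harmonicOnNhd.contDiffOn
  have hw₂ : ContDiffOn ℝ 2 (u - h) Ω := hu.sub hh₂
  have hw : HasZeroBoundaryValues (u - h) Ω :=
    ⟨hw₂.of_le one_le_two, hu_cont.sub hh.continuousOn, fun x hx => sub_eq_zero.mpr (hhu hx).symm⟩
  have hDw : EqOn (∇ u - ∇ h) (∇ (u - h)) Ω := fun x hx =>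
    (gradient_sub ((hu.contDiffAt (hΩ.mem_nhds hx)).differentiableAt two_ne_zero)
      (hh.differentiableAt hx)).symm
  have hΔw : EqOn (Δ u) (Δ (u - h)) Ω := fun x hx => by
    rw [(hu.contDiffAt (hΩ.mem_nhds hx)).laplacian_sub (hh.contDiffAt hx),
      (hh.harmonicOnNhd x hx).2.eq_of_nhds, Pi.zero_apply, sub_zero]
  have hDw_Lp := (memLp_congr_ae (ae_restrict_of_forall_mem hΩ.measurableSet hDw)).mp (hDu.sub hDh)
  have hΔw_Lp := (memLp_congr_ae (ae_restrict_of_forall_mem hΩ.measurableSet hΔw)).mp hΔu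
  have hΔw_sq : EqOn (fun x => Δ u x ^ 2) (fun x => Δ (u - h) x ^ 2) Ω :=
    hΔw.comp_left (g := (· ^ 2))
  have hPythagoras := hw.setIntegral_norm_gradient_add_sq_of_harmonicOnNhd hΩ
    (isBounded_closedBall.subset hΩR) hh.harmonicOnNhd hDw_Lp hDh
  have hEnergy := hw.setIntegral_norm_gradient_sq_le hΩ hR hΩR hw₂ hDw_Lp hΔw_Lp
  rw [sub_add_cancel] at hPythagoras
  rw [← setIntegral_congr_fun hΩ.measurableSet hΔw_sq] at hEnergy
  linarith

/-- **Łojasiewicz inequality (exponent 1/2) for the Dirichlet energy.**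
There is `C > 0`, depending only on `d`, such that for every `u` of class `C²` on the
closed unit ball and every `h` of class `C¹` on the closed unit ball, harmonic in the open
ball, with `h = u` on the boundary sphere, one has
`∫_{B₁} |∇u|² - ∫_{B₁} |∇h|² ≤ C ∫_{B₁} |Δu|²`. -/
theorem loja_dirichlet_energy (d : ℕ) (hd : 1 ≤ d) :
    ∃ C > (0:ℝ), ∀ u h : EuclideanSpace ℝ (Fin d) → ℝ,
      ContDiffOn ℝ 2 u (Metric.closedBall (0 : EuclideanSpace ℝ (Fin d)) 1) →
      ContDiffOn ℝ 1 h (Metric.closedBall (0 : EuclideanSpace ℝ (Fin d)) 1) →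
      ContDiffOn ℝ 2 h (Metric.ball (0 : EuclideanSpace ℝ (Fin d)) 1) →
      (∀ x ∈ Metric.ball (0 : EuclideanSpace ℝ (Fin d)) 1, lapl h x = 0) →
      (∀ x ∈ Metric.sphere (0 : EuclideanSpace ℝ (Fin d)) 1, h x = u x) →
      (∫ x in Metric.ball (0 : EuclideanSpace ℝ (Fin d)) 1, ‖gradient u x‖ ^ 2)
          - (∫ x in Metric.ball (0 : EuclideanSpace ℝ (Fin d)) 1, ‖gradient h x‖ ^ 2)
        ≤ C * ∫ x in Metric.ball (0 : EuclideanSpace ℝ (Fin d)) 1, (lapl u x) ^ 2 := by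
  refine ⟨4 * 1 ^ 2, by norm_num, fun u h hu hh₁ hh₂ hΔh hhu => ?_⟩
  have hK := isCompact_closedBall (0 : EuclideanSpace ℝ (Fin d)) 1
  have hK' := uniqueDiffOn_closedBall (0 : EuclideanSpace ℝ (Fin d)) one_pos
  rw [lapl_eq_laplacian] at hΔh ⊢
  have hharm := harmonicContOnCl_of_laplacian_eq_zero isOpen_ball hh₂
    (hh₁.continuousOn.mono closure_ball_subset_closedBall) hΔh
  exact loja_dirichlet_energy_general isOpen_ball one_pos ball_subset_closedBall
    (hu.mono ball_subset_closedBall) (hu.continuousOn.mono closure_ball_subset_closedBall) hharm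
    (fun x hx => hhu x (frontier_ball_subset_sphere hx))
    (memLp_gradient_of_contDiffOn 2 hK hK' (hu.of_le one_le_two) isOpen_ball ball_subset_closedBall)
    (memLp_gradient_of_contDiffOn 2 hK hK' hh₁ isOpen_ball ball_subset_closedBall)
    (memLp_laplacian_of_contDiffOn 2 hK hK' hu isOpen_ball ball_subset_closedBall)
end

section
/- Let u : [0, T) → K be a strong solution of the parabolic variational inequality associated with (F, K). Then for almost every t ∈ (0, T) (namely every t at which u is differentiable and at which the variational inequality holds) one has ‖u'(t)‖² = −⟨u'(t), ∇F(u(t))⟩. -/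
open MeasureTheory Filter Topology Set
open scoped RealInnerProductSpace ENNReal

variable {H : Type*} [NormedAddCommGroup H] [InnerProductSpace ℝ H]

/-- `F(u + tv) = F(u) + t⟪v, ∇F(u)⟫ + o(t)` as `t → 0`, for all `u, v` in the subspace `W`. -/
def HasGradientOn (F : H → ℝ) (gF : H → H) (W : Submodule ℝ H) : Prop :=
  ∀ u ∈ W, ∀ v ∈ W, HasDerivAt (fun t : ℝ => F (u + t • v)) ⟪v, gF u⟫ 0

/-- `u : [0, T) → K`, with (a.e.) derivative `u'`, is a strong solution of the parabolic
variational inequality associated with `(F, K)`: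
continuity into `H` on `[0, T)`; `H¹_loc` regularity in time (a.e. differentiability with
locally square-integrable derivative); `u(t) ∈ W ∩ K` for `t ∈ (0, T)` with `t ↦ F(u(t))`
and `t ↦ ∇F(u(t))` continuous; and for a.e. `t ∈ (0, T)`,
`⟪u'(t) + ∇F(u(t)), v - u(t)⟫ ≥ 0` for every `v ∈ K`. -/
structure IsStrongSolutionOn (F : H → ℝ) (gF : H → H) (W : Submodule ℝ H) (K : Set H)
    (T : ℝ) (u u' : ℝ → H) : Prop where
  mem_K : ∀ t ∈ Ico (0:ℝ) T, u t ∈ K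
  contOn : ContinuousOn u (Ico 0 T)
  hasDeriv : ∀ᵐ t ∂(volume.restrict (Ioo (0:ℝ) T)), HasDerivAt u (u' t) t
  sqInt : ∀ a b : ℝ, 0 < a → b < T → IntegrableOn (fun t => ‖u' t‖ ^ 2) (Ioo a b)
  mem_W : ∀ t ∈ Ioo (0:ℝ) T, u t ∈ W
  contF : ContinuousOn (fun t => F (u t)) (Ioo 0 T)
  contgF : ContinuousOn (fun t => gF (u t)) (Ioo 0 T)
  varIneq : ∀ᵐ t ∂(volume.restrict (Ioo (0:ℝ) T)), ∀ v ∈ K, 0 ≤ ⟪u' t + gF (u t), v - u t⟫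

/-!
At an interior time `t`, both the past and the future of the trajectory are admissible test
vectors. Hence `s ↦ ⟪u'(t) + ∇F(u(t)), u(s) - u(t)⟫` is nonnegative near `t` and vanishes at `t`,
so its derivative `⟪u'(t) + ∇F(u(t)), u'(t)⟫` at this minimum is zero.
-/

theorem inner_eq_zero_of_hasDerivAt_of_eventually_inner_sub_nonneg {u : ℝ → H} {w d : H} {t : ℝ}
    (hd : HasDerivAt u d t) (hw : ∀ᶠ s in 𝓝 t, 0 ≤ ⟪w, u s - u t⟫) : ⟪w, d⟫ = 0 := by
  have hmin : IsLocalMin (fun s => ⟪w, u s - u t⟫) t := by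
    simpa only [IsLocalMin, IsMinFilter, sub_self, inner_zero_right] using hw
  exact hmin.hasDerivAt_eq_zero ((innerSL ℝ w).hasFDerivAt.comp_hasDerivAt t (hd.sub_const (u t)))

theorem norm_sq_eq_neg_inner_of_variational_inequality {u : ℝ → H} {K : Set H} {d g : H} {t : ℝ}
    (hd : HasDerivAt u d t) (hmem : ∀ᶠ s in 𝓝 t, u s ∈ K)
    (hvar : ∀ v ∈ K, 0 ≤ ⟪d + g, v - u t⟫) : ‖d‖ ^ 2 = -⟪d, g⟫ := by
  have horth : ⟪d + g, d⟫ = 0 :=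
    inner_eq_zero_of_hasDerivAt_of_eventually_inner_sub_nonneg hd (hmem.mono fun s => hvar (u s))
  rw [inner_add_left, real_inner_self_eq_norm_sq, real_inner_comm] at horth
  exact eq_neg_of_add_eq_zero_left horth

theorem strong_solution_deriv_sq_general {K : Set H} {I : Set ℝ} (hI : IsOpen I) {μ : Measure ℝ}
    {u u' g : ℝ → H} (hmem : ∀ t ∈ I, u t ∈ K)
    (hderiv : ∀ᵐ t ∂(μ.restrict I), HasDerivAt u (u' t) t)
    (hvar : ∀ᵐ t ∂(μ.restrict I), ∀ v ∈ K, 0 ≤ ⟪u' t + g t, v - u t⟫) :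
    ∀ᵐ t ∂(μ.restrict I), ‖u' t‖ ^ 2 = -⟪u' t, g t⟫ := by
  filter_upwards [hderiv, hvar, ae_restrict_mem hI.measurableSet] with t hd hv ht
  exact norm_sq_eq_neg_inner_of_variational_inequality hd
    ((hI.eventually_mem ht).mono hmem) hv

/-- **Lemma (i): a.e. `‖u'(t)‖² = -⟪u'(t), ∇F(u(t))⟫`** for a strong solution `u` of the
parabolic variational inequality associated with `(F, K)`. -/
theorem strong_solution_deriv_sq
    (F : H → ℝ) (gF : H → H) (W : Submodule ℝ H) (K : Set H)
    (hK : Convex ℝ K) (hF : HasGradientOn F gF W)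
    (T : ℝ) (u u' : ℝ → H) (hu : IsStrongSolutionOn F gF W K T u u') :
    ∀ᵐ t ∂(volume.restrict (Ioo (0:ℝ) T)), ‖u' t‖ ^ 2 = -⟪u' t, gF (u t)⟫ :=
  strong_solution_deriv_sq_general isOpen_Ioo
    (fun t ht => hu.mem_K t (Ioo_subset_Ico_self ht)) hu.hasDeriv hu.varIneq
end

section
/- Let u : [0, T) → K be a strong solution of the parabolic variational inequality associated with (F, K). Then for almost every t ∈ (0, T) one has ‖u'(t)‖ = ‖∇F(u(t))‖_K, where ‖∇F(u(t))‖_K := max(0, sup_{v ∈ K, v ≠ u(t)} (−⟨v − u(t), ∇F(u(t))⟩ / ‖v − u(t)‖)). -/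
open MeasureTheory Filter Topology Set
open scoped RealInnerProductSpace ENNReal

variable {H : Type*} [NormedAddCommGroup H] [InnerProductSpace ℝ H]

/-- The constrained norm `‖∇F(u)‖_K = max(0, sup_{v ∈ K, v ≠ u} (-⟪v - u, ∇F(u)⟫/‖v - u‖))`,
computed in `[0, ∞]` (the truncation `max 0 ⬝` is realized by `ENNReal.ofReal`). -/
noncomputable def KNorm (gF : H → H) (K : Set H) (u : H) : ℝ≥0∞ :=
  ⨆ v ∈ K \ {u}, ENNReal.ofReal (-⟪v - u, gF u⟫ / ‖v - u‖)

/-!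
Just before and after `t` the curve lies in `K`, so both `u'(t)` and `-u'(t)` are tangent to `K`
at `u(t)`, and the variational inequality tested along them becomes the equality
`⟪u' + ∇F(u), u'⟫ = 0`: the rate of descent `-⟪v, ∇F(u)⟫ / ‖v‖` in the direction `v = u'` is exactly
`‖u'‖`. The inequality together with Cauchy–Schwarz bounds the rate by `‖u'‖` in every direction
`v - u` with `v ∈ K`. Away from `v = 0` the rate is continuous, and it is invariant under positive
scaling, so in the tangent direction `u'` it is at most the supremum `‖∇F(u)‖_K`.
-/

section PosTangentCone

theorem mapsTo_posTangentConeAt_image {E G : Type*} [NormedAddCommGroup E] [NormedSpace ℝ E]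
    [NormedAddCommGroup G] [NormedSpace ℝ G] {f : E → G} {f' : E →L[ℝ] G} {s : Set E} {x : E}
    (hf : HasFDerivWithinAt f f' s x) :
    MapsTo f' (posTangentConeAt s x) (posTangentConeAt (f '' s) (f x)) := by
  intro y hy
  obtain ⟨α, l, _, c, d, hd, hds, hcd⟩ := exists_fun_of_mem_tangentConeAt hy
  have hxd : Tendsto (fun n => x + d n) l (𝓝[s] x) :=
    tendsto_nhdsWithin_iff.2 ⟨by simpa using tendsto_const_nhds.add hd, hds⟩
  have hfd : Tendsto (fun n => f (x + d n) - f x) l (𝓝 0) := by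
    simpa using (hf.continuousWithinAt.tendsto.comp hxd).sub_const (f x)
  refine mem_tangentConeAt_of_seq l c _ hfd ?_ (hf.lim hd hds hcd)
  exact hds.mono fun n hn => by simpa using mem_image_of_mem f hn

theorem smul_mem_posTangentConeAt_of_hasDerivAt {E : Type*} [NormedAddCommGroup E]
    [NormedSpace ℝ E] {u : ℝ → E} {y : E} {K : Set E} {t : ℝ} (hu : HasDerivAt u y t)
    (hK : u ⁻¹' K ∈ 𝓝 t) (r : ℝ) : r • y ∈ posTangentConeAt K (u t) := by
  have hr : r ∈ posTangentConeAt (u ⁻¹' K) t := by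
    rw [posTangentConeAt, tangentConeAt_of_mem_nhds hK]
    exact mem_univ r
  have hry := mapsTo_posTangentConeAt_image hu.hasFDerivAt.hasFDerivWithinAt hr
  simpa using posTangentConeAt_mono (image_preimage_subset u K) hry

theorem inner_eq_zero_of_mem_posTangentConeAt {K : Set H} {w x y : H}
    (hw : ∀ v ∈ K, 0 ≤ ⟪w, v - x⟫) (hy : y ∈ posTangentConeAt K x)
    (hy' : -y ∈ posTangentConeAt K x) : ⟪w, y⟫ = 0 := by
  have hmin : IsMinOn (innerSL ℝ w) K x := fun v hv => by
    simpa [inner_sub_right] using hw v hv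
  exact hmin.localize.hasFDerivWithinAt_eq_zero (innerSL ℝ w).hasFDerivWithinAt hy hy'

end PosTangentCone

section DescentRate

variable {p v x y : H} {K : Set H} {gF : H → H}

/-- The rate of descent, per unit length in the direction `v`, of a function with gradient `p`;
`KNorm gF K u` is the supremum of the positive parts of the rates with `p = gF u` in the directions
from `u` to the other points of `K`. It takes the junk value `0` at `v = 0`. -/
noncomputable def descentRate (p v : H) : ℝ :=
  -⟪v, p⟫ / ‖v‖

theorem descentRate_smul {c : ℝ} (hc : 0 < c) :
    descentRate p (c • v) = descentRate p v := by
  simp only [descentRate, real_inner_smul_left, norm_smul, Real.norm_of_nonneg hc.le]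
  rw [← mul_neg, mul_div_mul_left _ _ hc.ne']

theorem continuousAt_descentRate (hv : v ≠ 0) : ContinuousAt (descentRate p) v := by
  unfold descentRate
  exact (by fun_prop : ContinuousAt (fun v : H => -⟪v, p⟫) v).div continuousAt_id.norm
    (norm_ne_zero_iff.2 hv)

theorem descentRate_le_norm_of_inner_add_nonneg (h : 0 ≤ ⟪y + p, v⟫) :
    descentRate p v ≤ ‖y‖ := by
  refine div_le_of_le_mul₀ (norm_nonneg v) (norm_nonneg y) ?_
  calc -⟪v, p⟫ ≤ ⟪y, v⟫ := by rw [inner_add_left, real_inner_comm v p] at h; linarith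
    _ ≤ ‖y‖ * ‖v‖ := real_inner_le_norm y v

theorem descentRate_eq_norm_of_inner_add_eq_zero (h : ⟪y + p, y⟫ = 0) :
    descentRate p y = ‖y‖ := by
  have hinner : -⟪y, p⟫ = ‖y‖ * ‖y‖ := by
    rw [inner_add_left, real_inner_self_eq_norm_mul_norm, real_inner_comm y p] at h
    linarith
  rw [descentRate, hinner, mul_self_div_self]

theorem ofReal_descentRate_le_KNorm (hv : v ∈ K) :
    ENNReal.ofReal (descentRate (gF x) (v - x)) ≤ KNorm gF K x := by
  obtain rfl | hvx := eq_or_ne v x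
  · simp [descentRate]
  · exact le_iSup₂ (f := fun v (_ : v ∈ K \ {x}) =>
      ENNReal.ofReal (descentRate (gF x) (v - x))) v ⟨hv, hvx⟩

theorem ofReal_descentRate_le_KNorm_of_mem_posTangentConeAt (hy : y ∈ posTangentConeAt K x) :
    ENNReal.ofReal (descentRate (gF x) y) ≤ KNorm gF K x := by
  obtain rfl | hy0 := eq_or_ne y 0
  · simp [descentRate]
  obtain ⟨α, l, _, c, d, -, hdK, hcd⟩ := exists_fun_of_mem_tangentConeAt hy
  have hlim := ENNReal.tendsto_ofReal ((continuousAt_descentRate (p := gF x) hy0).tendsto.comp hcd)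
  refine le_of_tendsto hlim ?_
  filter_upwards [hdK, hcd.eventually_ne hy0] with n hn hcdn
  have hc : 0 < (c n : ℝ) := NNReal.coe_pos.2 (pos_of_ne_zero (left_ne_zero_of_smul hcdn))
  simpa only [Function.comp_apply, NNReal.smul_def, descentRate_smul hc, add_sub_cancel_left]
    using ofReal_descentRate_le_KNorm (gF := gF) (x := x) hn

theorem KNorm_eq_ofReal_norm_of_mem_posTangentConeAt
    (hvar : ∀ v ∈ K, 0 ≤ ⟪y + gF x, v - x⟫) (hy : y ∈ posTangentConeAt K x)
    (hy' : -y ∈ posTangentConeAt K x) : KNorm gF K x = ENNReal.ofReal ‖y‖ := by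
  apply le_antisymm
  · exact iSup₂_le fun v hv =>
      ENNReal.ofReal_le_ofReal (descentRate_le_norm_of_inner_add_nonneg (hvar v hv.1))
  · rw [← descentRate_eq_norm_of_inner_add_eq_zero
      (inner_eq_zero_of_mem_posTangentConeAt hvar hy hy')]
    exact ofReal_descentRate_le_KNorm_of_mem_posTangentConeAt hy

end DescentRate

theorem strong_solution_deriv_eq_KNorm_general (gF : H → H) (K : Set H) {μ : Measure ℝ}
    {S : Set ℝ} (hS : IsOpen S) {u u' : ℝ → H} (hmem : ∀ t ∈ S, u t ∈ K)
    (hderiv : ∀ᵐ t ∂(μ.restrict S), HasDerivAt u (u' t) t)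
    (hvar : ∀ᵐ t ∂(μ.restrict S), ∀ v ∈ K, 0 ≤ ⟪u' t + gF (u t), v - u t⟫) :
    ∀ᵐ t ∂(μ.restrict S), ENNReal.ofReal ‖u' t‖ = KNorm gF K (u t) := by
  filter_upwards [hderiv, hvar, ae_restrict_mem hS.measurableSet] with t hd hv ht
  have htangent : ∀ r : ℝ, r • u' t ∈ posTangentConeAt K (u t) :=
    smul_mem_posTangentConeAt_of_hasDerivAt hd (mem_of_superset (hS.mem_nhds ht) hmem)
  exact (KNorm_eq_ofReal_norm_of_mem_posTangentConeAt hv (by simpa using htangent 1)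
    (by simpa using htangent (-1))).symm

/-- **Lemma (iii): a.e. `‖u'(t)‖ = ‖∇F(u(t))‖_K`** along a strong solution of the parabolic
variational inequality associated with `(F, K)`. -/
theorem strong_solution_deriv_eq_KNorm
    (F : H → ℝ) (gF : H → H) (W : Submodule ℝ H) (K : Set H)
    (hK : Convex ℝ K) (hF : HasGradientOn F gF W)
    (T : ℝ) (u u' : ℝ → H) (hu : IsStrongSolutionOn F gF W K T u u') :
    ∀ᵐ t ∂(volume.restrict (Ioo (0:ℝ) T)), ENNReal.ofReal ‖u' t‖ = KNorm gF K (u t) :=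
  strong_solution_deriv_eq_KNorm_general gF K isOpen_Ioo
    (fun t ht => hu.mem_K t (Ioo_subset_Ico_self ht)) hu.hasDeriv hu.varIneq
end
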